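/- arXiv:1908.09420 — 9 statements merged into one kernel-verified Lean document; each statement's English description precedes it below -/
import Mathlib

section
/- Let N be an odd perfect number and let p_1 < p_2 < ... < p_k be its distinct prime divisors. Then for every integer i with 0 ≤ i ≤ k-1, the (i+1)-th largest prime divisor satisfies p_{k-i} < (2N)^(1/(2i+2)), i.e., (p_{k-i})^(2i+2) < 2N. -/
/-!
Since `σ(N) = 2N` is not divisible by `4`, at most one prime `q` has an odd exponent in `N` (Euler).
Write `N = B * R`, where `B` collects the prime powers of the `i + 1` primes `≥ p`. All primes of
`B` except possibly one are at least squared, so `p ^ (2 * i + 1) ≤ B`.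

If `R ≠ 1`, then `p < 2 * R`, which gives `p ^ (2 * i + 2) < 2 * B * R`. Otherwise
`σ(R) < 2 * R ≤ p` would be coprime to `B`, and `σ(B) * σ(R) = 2 * B * R` would make `σ(R)` a
divisor of `2 * R` strictly between `R` and `2 * R`.

If `R = 1`, then `p` is the least prime of `N`, and `2 = σ(N) / N < ∏ u / (u - 1)` over the primes
`u` of `N` forces `i + 1 ≥ p` (Servais). As the primes are distinct, `i` of them have product at
least `p * (p + 1) * ⋯ * (p + i - 1)`, whose square exceeds `p ^ (2 * i)` by more than the missing
factor `p / 2`.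
-/

open Finset
open ArithmeticFunction (isMultiplicative_sigma sigma_apply_prime_pow sigma_one_apply
  sigma_one_apply_prime_pow sigma_pos)
open scoped ArithmeticFunction.sigma Nat

theorem card_filter_le_eq_card_filter_lt_add_one {α : Type*} [LinearOrder α] {s : Finset α} {a : α}
    (ha : a ∈ s) : #(s.filter (a ≤ ·)) = #(s.filter (a < ·)) + 1 := by
  simp_rw [le_iff_eq_or_lt, filter_or, filter_eq, if_pos ha, ← insert_eq]
  exact card_insert_of_notMem (by simp)

theorem add_card_le_of_subset_Ico {s : Finset ℕ} {m a : ℕ} (hma : m ≤ a) (h : s ⊆ Ico m a) :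
    m + #s ≤ a := by
  have hcard : #s ≤ a - m := Nat.card_Ico m a ▸ card_le_card h
  omega

theorem ascFactorial_card_le_prod {s : Finset ℕ} {m : ℕ} (h : ∀ u ∈ s, m ≤ u) :
    m.ascFactorial #s ≤ ∏ u ∈ s, u := by
  induction s using Finset.induction_on_max with
  | empty => simp
  | insert a s hmax ih =>
    obtain ⟨hma, hs⟩ := (forall_mem_insert _ _ _).1 h
    have ha : a ∉ s := fun has => (hmax a has).false
    rw [prod_insert ha, card_insert_of_notMem ha, Nat.ascFactorial_succ]
    exact Nat.mul_le_mul
      (add_card_le_of_subset_Ico hma fun u hu => mem_Ico.2 ⟨hs u hu, hmax u hu⟩) (ih hs)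

theorem mul_prod_le_add_card_mul_prod_sub_one {s : Finset ℕ} {m : ℕ} (h : ∀ u ∈ s, m < u) :
    m * ∏ u ∈ s, u ≤ (m + #s) * ∏ u ∈ s, (u - 1) := by
  induction s using Finset.induction_on_max with
  | empty => simp
  | insert a s hmax ih =>
    obtain ⟨hma, hs⟩ := (forall_mem_insert _ _ _).1 h
    have ha : a ∉ s := fun has => (hmax a has).false
    have hcard : m + 1 + #s ≤ a :=
      add_card_le_of_subset_Ico hma fun u hu => mem_Ico.2 ⟨hs u hu, hmax u hu⟩
    rw [prod_insert ha, prod_insert ha, card_insert_of_notMem ha]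
    obtain ⟨b, rfl⟩ := Nat.exists_eq_add_of_lt hma
    have hstep : (m + b + 1) * (m + #s) ≤ (m + (#s + 1)) * (m + b) := by linarith
    calc m * ((m + b + 1) * ∏ u ∈ s, u) = (m + b + 1) * (m * ∏ u ∈ s, u) := by ring
      _ ≤ (m + b + 1) * ((m + #s) * ∏ u ∈ s, (u - 1)) := Nat.mul_le_mul_left _ (ih hs)
      _ = ((m + b + 1) * (m + #s)) * ∏ u ∈ s, (u - 1) := by ring
      _ ≤ ((m + (#s + 1)) * (m + b)) * ∏ u ∈ s, (u - 1) := by gcongr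
      _ = (m + (#s + 1)) * ((m + b + 1 - 1) * ∏ u ∈ s, (u - 1)) := by
        rw [Nat.add_sub_cancel, mul_assoc]

theorem pow_mul_le_mul_ascFactorial_sq (m n : ℕ) :
    m ^ (2 * n) * (m + n * (n - 1)) ≤ m * m.ascFactorial n ^ 2 := by
  induction n with
  | zero => simp
  | succ n ih =>
    have hstep : m ^ 2 * (m + (n + 1) * n) ≤ (m + n) ^ 2 * (m + n * (n - 1)) := by
      rcases n with _ | n
      · simp
      · rw [Nat.add_sub_cancel]
        exact Nat.le.intro (k := (n + 1) ^ 2 * (m * (2 * n + 1) + (n + 1) * n)) (by ring)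
    calc m ^ (2 * (n + 1)) * (m + (n + 1) * n)
        = m ^ (2 * n) * (m ^ 2 * (m + (n + 1) * n)) := by ring
      _ ≤ m ^ (2 * n) * ((m + n) ^ 2 * (m + n * (n - 1))) := by gcongr
      _ = (m + n) ^ 2 * (m ^ (2 * n) * (m + n * (n - 1))) := by ring
      _ ≤ (m + n) ^ 2 * (m * m.ascFactorial n ^ 2) := by gcongr
      _ = m * m.ascFactorial (n + 1) ^ 2 := by rw [Nat.ascFactorial_succ]; ring

theorem pow_lt_two_mul_mul_ascFactorial_sq {m n : ℕ} (hm : 3 ≤ m) (hmn : m ≤ n + 1) :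
    m ^ (2 * n + 2) < 2 * (m * m.ascFactorial n ^ 2) := by
  have hlt : m ^ 2 < 2 * (m + n * (n - 1)) := by
    obtain ⟨k, rfl⟩ := Nat.exists_eq_add_of_le' hm
    obtain ⟨l, rfl⟩ := Nat.exists_eq_add_of_le (show k + 2 ≤ n by omega)
    rw [show k + 2 + l - 1 = k + l + 1 by omega]
    nlinarith
  calc m ^ (2 * n + 2) = m ^ (2 * n) * m ^ 2 := pow_add _ _ _
    _ < m ^ (2 * n) * (2 * (m + n * (n - 1))) := by gcongr
    _ = 2 * (m ^ (2 * n) * (m + n * (n - 1))) := by ring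
    _ ≤ 2 * (m * m.ascFactorial n ^ 2) :=
      Nat.mul_le_mul_left 2 (pow_mul_le_mul_ascFactorial_sq m n)

theorem minFac_le_of_mem_primeFactors {n u : ℕ} (hu : u ∈ n.primeFactors) : n.minFac ≤ u :=
  Nat.minFac_le_of_dvd (Nat.prime_of_mem_primeFactors hu).two_le (Nat.dvd_of_mem_primeFactors hu)

theorem minFac_mem_primeFactors {n : ℕ} (hn : n ≠ 0) (hn1 : n ≠ 1) :
    n.minFac ∈ n.primeFactors :=
  Nat.mem_primeFactors.2 ⟨Nat.minFac_prime hn1, n.minFac_dvd, hn⟩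

theorem minFac_eq_of_primeFactors_eq_filter_le {b n p : ℕ} (hp : p ∈ n.primeFactors)
    (hb : b.primeFactors = n.primeFactors.filter (p ≤ ·)) : b.minFac = p := by
  have hpb : p ∈ b.primeFactors := hb ▸ mem_filter.2 ⟨hp, le_rfl⟩
  have hmin : b.minFac ∈ b.primeFactors :=
    minFac_mem_primeFactors (by rintro rfl; simp at hpb) (by rintro rfl; simp at hpb)
  refine (minFac_le_of_mem_primeFactors hpb).antisymm ?_
  exact (mem_filter.1 (hb ▸ hmin)).2

theorem exists_coprime_mul_eq_primeFactors_eq_filter {n : ℕ} (hn : n ≠ 0) (P : ℕ → Prop)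
    [DecidablePred P] :
    ∃ a b, a.Coprime b ∧ a * b = n ∧ a.primeFactors = n.primeFactors.filter P := by
  let part (Q : ℕ → Prop) [DecidablePred Q] : ℕ := (n.factorization.filter Q).prod (· ^ ·)
  have factorization_part (Q : ℕ → Prop) [DecidablePred Q] :
      (part Q).factorization = n.factorization.filter Q :=
    Nat.prod_pow_factorization_eq_self fun u hu =>
      Nat.prime_of_mem_primeFactors (mem_of_mem_filter u hu)
  have primeFactors_part (Q : ℕ → Prop) [DecidablePred Q] :
      (part Q).primeFactors = n.primeFactors.filter Q := by
    rw [← Nat.support_factorization, factorization_part, Finsupp.support_filter,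
      Nat.support_factorization]
  have hmul : part P * part (¬ P ·) = n :=
    calc part P * part (¬ P ·) = n.factorization.prod (· ^ ·) :=
          Finsupp.prod_filter_mul_prod_filter_not ..
      _ = n := Nat.prod_factorization_pow_eq_self hn
  obtain ⟨ha, hb⟩ := Nat.mul_ne_zero_iff.1 (hmul.trans_ne hn)
  refine ⟨part P, part (¬ P ·), ?_, hmul, primeFactors_part P⟩
  rw [← Nat.disjoint_primeFactors ha hb, primeFactors_part, primeFactors_part]
  exact disjoint_filter_filter_not ..

section SumOfDivisors

variable {n : ℕ}

theorem lt_sigma_one (hn : 1 < n) : n < σ 1 n := by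
  rw [sigma_one_apply, Nat.sum_divisors_eq_sum_properDivisors_add_self]
  have hproper : 0 < ∑ d ∈ n.properDivisors, d :=
    sum_pos (fun _ => Nat.pos_of_mem_properDivisors)
      ⟨1, Nat.one_mem_properDivisors_iff_one_lt.2 hn⟩
  omega

theorem sigma_eq_prod_primeFactors (k : ℕ) (hn : n ≠ 0) :
    σ k n = ∏ u ∈ n.primeFactors, σ k (u ^ n.factorization u) :=
  isMultiplicative_sigma.multiplicative_factorization _ hn

theorem sigma_one_mul_totient_prime_pow_lt_sq {p k : ℕ} (hp : p.Prime) (hk : 0 < k) :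
    σ 1 (p ^ k) * φ (p ^ k) < (p ^ k) ^ 2 := by
  have hgeom : σ 1 (p ^ k) * (p - 1) < p ^ (k + 1) := by
    rw [sigma_one_apply_prime_pow hp]
    have hsum := geom_sum_mul_add (p - 1) (k + 1)
    rw [Nat.sub_add_cancel hp.one_le] at hsum
    omega
  calc σ 1 (p ^ k) * φ (p ^ k) = p ^ (k - 1) * (σ 1 (p ^ k) * (p - 1)) := by
        rw [Nat.totient_prime_pow hp hk]; ring
    _ < p ^ (k - 1) * p ^ (k + 1) := by gcongr; exact pow_pos hp.pos _
    _ = (p ^ k) ^ 2 := by rw [← pow_add, ← pow_mul]; congr 1; omega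

theorem sigma_one_mul_totient_lt_sq (hn : 1 < n) : σ 1 n * φ n < n ^ 2 := by
  have hn0 : n ≠ 0 := by omega
  have htotient : φ n = ∏ u ∈ n.primeFactors, φ (u ^ n.factorization u) :=
    Nat.multiplicative_factorization φ (fun _ _ => Nat.totient_mul) Nat.totient_one hn0
  have hprime {u} (hu : u ∈ n.primeFactors) : u.Prime := Nat.prime_of_mem_primeFactors hu
  calc σ 1 n * φ n
      = ∏ u ∈ n.primeFactors, σ 1 (u ^ n.factorization u) * φ (u ^ n.factorization u) := by
        rw [sigma_eq_prod_primeFactors 1 hn0, htotient, prod_mul_distrib]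
    _ < ∏ u ∈ n.primeFactors, (u ^ n.factorization u) ^ 2 := by
        refine prod_lt_prod_of_nonempty (fun u hu => ?_) (fun u hu => ?_)
          (Nat.nonempty_primeFactors.2 hn)
        · have hpos : 0 < u ^ n.factorization u := pow_pos (hprime hu).pos _
          exact Nat.mul_pos (sigma_pos 1 _ hpos.ne') (Nat.totient_pos.2 hpos)
        · exact sigma_one_mul_totient_prime_pow_lt_sq (hprime hu)
            ((hprime hu).factorization_pos_of_dvd hn0 (Nat.dvd_of_mem_primeFactors hu))
    _ = n ^ 2 := by
        rw [prod_pow]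
        congr 1
        exact Nat.prod_factorization_pow_eq_self hn0

theorem two_dvd_sigma_prime_pow {p a : ℕ} (k : ℕ) (hp : p.Prime) (hpodd : Odd p) (ha : Odd a) :
    2 ∣ σ k (p ^ a) := by
  rw [sigma_apply_prime_pow hp, ← even_iff_two_dvd, even_sum_iff_even_card_odd,
    filter_true_of_mem fun _ _ => hpodd.pow, card_range]
  exact ha.add_one

theorem minFac_le_card_primeFactors_of_two_mul_le_sigma_one (hn : n ≠ 0) (hσ : 2 * n ≤ σ 1 n) :
    n.minFac ≤ #n.primeFactors := by
  have hn1 : 1 < n := by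
    refine Nat.one_lt_iff_ne_zero_and_ne_one.2 ⟨hn, ?_⟩
    rintro rfl
    simp at hσ
  have htotient : 2 * φ n < n := by
    refine lt_of_mul_lt_mul_left' (a := n) ?_
    calc n * (2 * φ n) = 2 * n * φ n := by ring
      _ ≤ σ 1 n * φ n := by gcongr
      _ < n * n := sq n ▸ sigma_one_mul_totient_lt_sq hn1
  have hprod : 2 * ∏ u ∈ n.primeFactors, (u - 1) < ∏ u ∈ n.primeFactors, u := by
    refine lt_of_mul_lt_mul_left' (a := n) ?_
    calc n * (2 * ∏ u ∈ n.primeFactors, (u - 1)) = 2 * φ n * ∏ u ∈ n.primeFactors, u := by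
          rw [mul_left_comm, ← Nat.totient_mul_prod_primeFactors, mul_assoc]
      _ < n * ∏ u ∈ n.primeFactors, u := by
          gcongr
          exact prod_pos fun u hu => (Nat.prime_of_mem_primeFactors hu).pos
  have hminFac := (Nat.minFac_prime hn1.ne').two_le
  have hdistinct := mul_prod_le_add_card_mul_prod_sub_one (s := n.primeFactors)
    (m := n.minFac - 1) fun u hu => by
      have := minFac_le_of_mem_primeFactors hu
      omega
  have hcard : 2 * (n.minFac - 1) < n.minFac - 1 + #n.primeFactors := by
    refine lt_of_mul_lt_mul_right' (a := ∏ u ∈ n.primeFactors, (u - 1)) ?_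
    refine lt_of_lt_of_le ?_ hdistinct
    rw [mul_comm 2, mul_assoc]
    exact Nat.mul_lt_mul_of_pos_left hprod (by omega)
  omega

end SumOfDivisors

theorem exists_forall_ne_even_factorization {n : ℕ} (hodd : Odd n) (hn : n ≠ 1)
    (hσ : ¬ 4 ∣ σ 1 n) :
    ∃ q ∈ n.primeFactors, ∀ u ∈ n.primeFactors, u ≠ q → Even (n.factorization u) := by
  have two_dvd {u : ℕ} (hu : u ∈ n.primeFactors) (hodd_u : Odd (n.factorization u)) :
      2 ∣ σ 1 (u ^ n.factorization u) :=
    two_dvd_sigma_prime_pow 1 (Nat.prime_of_mem_primeFactors hu)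
      (hodd.of_dvd_nat (Nat.dvd_of_mem_primeFactors hu)) hodd_u
  by_cases heven : ∀ u ∈ n.primeFactors, Even (n.factorization u)
  · exact ⟨n.minFac, minFac_mem_primeFactors hodd.pos.ne' hn, fun u hu _ => heven u hu⟩
  · push Not at heven
    obtain ⟨q, hq, hodd_q⟩ := heven
    refine ⟨q, hq, fun u hu huq => ?_⟩
    by_contra hodd_u
    refine hσ ?_
    rw [sigma_eq_prod_primeFactors 1 hodd.pos.ne', ← mul_prod_erase _ _ hq,
      ← mul_prod_erase _ _ (mem_erase.2 ⟨huq, hu⟩)]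
    exact mul_dvd_mul (two_dvd hq (Nat.not_even_iff_odd.1 hodd_q))
      ((two_dvd hu (Nat.not_even_iff_odd.1 hodd_u)).mul_right _)

theorem minFac_mul_ascFactorial_sq_le {n k : ℕ} (hodd : Odd n) (hσ : ¬ 4 ∣ σ 1 n)
    (hk : #n.primeFactors = k + 1) : n.minFac * n.minFac.ascFactorial k ^ 2 ≤ n := by
  have hn : n ≠ 0 := hodd.pos.ne'
  have hn1 : n ≠ 1 := by
    rintro rfl
    simp at hk
  obtain ⟨q, hq, heven⟩ := exists_forall_ne_even_factorization hodd hn1 hσ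
  have factorization_pos {u : ℕ} (hu : u ∈ n.primeFactors) : 0 < n.factorization u :=
    (Nat.prime_of_mem_primeFactors hu).factorization_pos_of_dvd hn (Nat.dvd_of_mem_primeFactors hu)
  have hcard : #(n.primeFactors.erase q) = k := by
    rw [card_erase_of_mem hq, hk, Nat.add_sub_cancel]
  calc n.minFac * n.minFac.ascFactorial k ^ 2 ≤ q * (∏ u ∈ n.primeFactors.erase q, u) ^ 2 := by
        gcongr
        · exact minFac_le_of_mem_primeFactors hq
        · exact hcard ▸ ascFactorial_card_le_prod fun u hu =>
            minFac_le_of_mem_primeFactors (mem_of_mem_erase hu)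
    _ = q * ∏ u ∈ n.primeFactors.erase q, u ^ 2 := by rw [prod_pow]
    _ ≤ q ^ n.factorization q * ∏ u ∈ n.primeFactors.erase q, u ^ n.factorization u := by
        gcongr with u hu
        · exact Nat.le_self_pow (factorization_pos hq).ne' q
        · exact n.minFac_pos.trans_le (minFac_le_of_mem_primeFactors (mem_of_mem_erase hu))
        · obtain ⟨huq, hu⟩ := mem_erase.1 hu
          obtain ⟨j, hj⟩ := heven u hu huq
          have := factorization_pos hu
          omega
    _ = ∏ u ∈ n.primeFactors, u ^ n.factorization u :=
        mul_prod_erase _ (fun u => u ^ n.factorization u) hq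
    _ = n := Nat.prod_factorization_pow_eq_self hn

theorem minFac_lt_two_mul_of_sigma_one_mul_eq {B R : ℕ} (hR : 1 < R)
    (hσ : σ 1 (B * R) = 2 * (B * R)) : B.minFac < 2 * R := by
  by_contra! hle
  have hB : 1 < B := by
    rcases B with _ | _ | B
    · rw [Nat.minFac_zero] at hle
      omega
    · rw [zero_add, Nat.minFac_one] at hle
      omega
    · omega
  have hcop : B.Coprime R := Nat.coprime_of_lt_minFac (by omega) (by omega)
  rw [isMultiplicative_sigma.map_mul_of_coprime hcop] at hσ
  have hσB : B < σ 1 B := lt_sigma_one hB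
  have hσR : R < σ 1 R := lt_sigma_one hR
  have hσR_lt : σ 1 R < 2 * R := by
    by_contra! h
    nlinarith [Nat.mul_le_mul hσB h]
  have hcopσ : (σ 1 R).Coprime B :=
    (Nat.coprime_of_lt_minFac (by omega) (hσR_lt.trans_le hle)).symm
  have hdvd : σ 1 R ∣ 2 * R := by
    refine hcopσ.dvd_of_dvd_mul_left ?_
    rw [mul_left_comm, ← hσ]
    exact dvd_mul_left ..
  obtain ⟨c, hc⟩ := hdvd
  have hc_two : 2 ≤ c := by
    by_contra! h
    interval_cases c <;> omega
  have hσR_two : σ 1 R * 2 ≤ σ 1 R * c := Nat.mul_le_mul_left _ hc_two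
  omega

theorem minFac_pow_lt_two_mul_of_two_mul_le_sigma_one {n k : ℕ} (hodd : Odd n) (hσ4 : ¬ 4 ∣ σ 1 n)
    (hσ : 2 * n ≤ σ 1 n) (hk : #n.primeFactors = k + 1) : n.minFac ^ (2 * k + 2) < 2 * n := by
  have hminFac : 3 ≤ n.minFac := by
    have hn : n ≠ 1 := by
      rintro rfl
      simp at hk
    have htwo := (Nat.minFac_prime hn).two_le
    obtain ⟨j, hj⟩ := hodd.of_dvd_nat n.minFac_dvd
    omega
  have hServais : n.minFac ≤ k + 1 :=
    hk ▸ minFac_le_card_primeFactors_of_two_mul_le_sigma_one hodd.pos.ne' hσ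
  calc n.minFac ^ (2 * k + 2) < 2 * (n.minFac * n.minFac.ascFactorial k ^ 2) :=
        pow_lt_two_mul_mul_ascFactorial_sq hminFac hServais
    _ ≤ 2 * n := Nat.mul_le_mul_left 2 (minFac_mul_ascFactorial_sq_le hodd hσ4 hk)

theorem minFac_pow_lt_two_mul_mul_of_sigma_one_mul_eq {B R k : ℕ} (hodd : Odd B)
    (hσ4 : ¬ 4 ∣ σ 1 B) (hk : #B.primeFactors = k + 1) (hR : 1 < R)
    (hσ : σ 1 (B * R) = 2 * (B * R)) :
    B.minFac ^ (2 * k + 2) < 2 * (B * R) := by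
  have hB : 0 < B := hodd.pos
  calc B.minFac ^ (2 * k + 2) = B.minFac * (B.minFac ^ k) ^ 2 * B.minFac := by ring
    _ ≤ B.minFac * B.minFac.ascFactorial k ^ 2 * B.minFac := by
        gcongr
        exact Nat.pow_succ_le_ascFactorial _ _
    _ ≤ B * B.minFac := by gcongr; exact minFac_mul_ascFactorial_sq_le hodd hσ4 hk
    _ < B * (2 * R) := by gcongr; exact minFac_lt_two_mul_of_sigma_one_mul_eq hR hσ
    _ = 2 * (B * R) := mul_left_comm ..

/-- Let N be an odd perfect number and let p_1 < ... < p_k be its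
distinct prime divisors. Then for every integer i with 0 ≤ i ≤ k-1, the
(i+1)-th largest prime divisor p_{k-i} (i.e., the prime divisor with exactly
i prime divisors of N above it) satisfies (p_{k-i})^(2i+2) < 2N. -/
theorem stmt_0 (N : ℕ) (hodd : Odd N) (hperf : Nat.Perfect N)
    (i p : ℕ) (hp : p ∈ N.primeFactors)
    (hcount : (N.primeFactors.filter (fun q => p < q)).card = i) :
    p ^ (2 * i + 2) < 2 * N := by
  have hσ : σ 1 N = 2 * N :=
    (sigma_one_apply N).trans ((Nat.perfect_iff_sum_divisors_eq_two_mul hodd.pos).1 hperf)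
  have hσ4 : ¬ 4 ∣ σ 1 N := by
    obtain ⟨k, rfl⟩ := hodd
    omega
  obtain ⟨B, R, hcop, rfl, hB⟩ :=
    exists_coprime_mul_eq_primeFactors_eq_filter hodd.pos.ne' (p ≤ ·)
  have hcard : #B.primeFactors = i + 1 := by
    rw [hB, card_filter_le_eq_card_filter_lt_add_one hp, hcount]
  rw [← minFac_eq_of_primeFactors_eq_filter_le hp hB]
  rcases eq_or_ne R 1 with rfl | hR
  · rw [mul_one] at hodd hσ hσ4 ⊢
    exact minFac_pow_lt_two_mul_of_two_mul_le_sigma_one hodd hσ4 hσ.ge hcard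
  · have hσB : ¬ 4 ∣ σ 1 B := fun h =>
      hσ4 (isMultiplicative_sigma.map_mul_of_coprime hcop ▸ h.mul_right _)
    have hR1 : 1 < R := by
      have := Nat.pos_of_mul_pos_left hodd.pos
      omega
    exact minFac_pow_lt_two_mul_mul_of_sigma_one_mul_eq (Nat.odd_mul.1 hodd).1 hσB hcard hR1 hσ
end

section
/- Let N be an odd perfect number with at least three distinct prime divisors, let c be its largest prime divisor, b its second largest prime divisor, and a its third largest prime divisor. Then abc < (2N)^(3/5), i.e., (abc)^5 < (2N)^3. -/
/-!
The bound holds for any three distinct primes dividing `N`. If the squares of all three divide `N`,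
so does the square of their product, which is more than enough. Since `σ(N) = 2N` is not divisible
by `4`, the only other possibility is `N = q * x ^ e * y ^ f * m` with `q`, `x`, `y` the three
primes and `e`, `f` even. Then `q` divides `σ(x ^ e)`, `σ(y ^ f)` or `σ(m)`, and the last case is
immediate from `q ≤ σ(m) ≤ 2m`.

Suppose `q ∣ σ(x ^ e)`, so that `2q < 3 * x ^ e`. The cofactor of `q` in `σ(x ^ e)` is odd, and it
is `-1` modulo `x` when `x ∣ q + 1`; being that large, it forces `q < x ^ (e - 1)`. By parity
`x ^ (e - 1)` does not divide `q + 1`, and since `x ^ e` divides `(q + 1) * σ(R)` for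
`R = y ^ f * m`, we get `x ^ 2 ∣ σ(R)` and so `x ^ 2 ≤ 2R`. This suffices unless `e = f = 2`. In
that case `x ≤ 2m` does: otherwise `x ^ 2 ∣ σ(y ^ 2)` and `y ^ 2 ∣ (q + 1) * σ(x ^ 2) / q`, and the
two divisibilities contradict each other by size.
-/

open ArithmeticFunction
open scoped ArithmeticFunction.sigma

theorem sigma_one_of_perfect {N : ℕ} (hN : N.Perfect) : σ 1 N = 2 * N := by
  rw [sigma_one_apply]
  exact (Nat.perfect_iff_sum_divisors_eq_two_mul hN.2).1 hN

theorem sigma_one_le_of_dvd_perfect {N d : ℕ} (hN : N.Perfect) (hd : d ∣ N) :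
    σ 1 d ≤ 2 * d := by
  have not_abundant : ¬ N.Abundant :=
    ((Nat.perfect_iff_not_abundant_and_not_deficient hN.2.ne).1 hN).1
  contrapose! not_abundant
  rw [sigma_one_apply] at not_abundant
  exact (Nat.abundant_iff_sum_divisors.2 not_abundant).of_dvd hd hN.2.ne'

theorem three_le_of_prime_of_odd {p : ℕ} (hp : p.Prime) (hodd : Odd p) : 3 ≤ p :=
  hp.two_le.lt_of_ne (by rintro rfl; exact absurd hodd (by decide))

section PrimePow

variable {p : ℕ}

theorem coprime_sigma_one_prime_pow (hp : p.Prime) (e : ℕ) : p.Coprime (σ 1 (p ^ e)) := by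
  rw [sigma_one_apply_prime_pow hp, geom_sum_succ]
  simp

theorem odd_sigma_one_prime_pow_iff (hp : p.Prime) (hodd : Odd p) {e : ℕ} :
    Odd (σ 1 (p ^ e)) ↔ Even e := by
  rw [sigma_one_apply_prime_pow hp, Finset.odd_sum_iff_odd_card_odd]
  simp [hodd.pow, Nat.odd_add_one]

theorem sigma_one_prime (hp : p.Prime) : σ 1 p = p + 1 := by
  simpa [Finset.sum_range_succ, add_comm] using sigma_one_apply_prime_pow (i := 1) hp

theorem sigma_one_prime_sq (hp : p.Prime) : σ 1 (p ^ 2) = p ^ 2 + p + 1 := by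
  rw [sigma_one_apply_prime_pow hp, geom_sum_succ, geom_sum_two]
  ring

theorem mul_sigma_one_prime_pow_add_one (hp : p.Prime) (e : ℕ) :
    p * σ 1 (p ^ e) + 1 = σ 1 (p ^ e) + p ^ (e + 1) := by
  rw [sigma_one_apply_prime_pow hp, ← geom_sum_succ, Finset.sum_range_succ]

theorem two_mul_sigma_one_prime_pow_lt (hp : p.Prime) (hp3 : 3 ≤ p) (e : ℕ) :
    2 * σ 1 (p ^ e) < 3 * p ^ e := by
  have h := mul_sigma_one_prime_pow_add_one hp e
  rw [pow_succ] at h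
  nlinarith

theorem pow_dvd_or_pow_succ_dvd_of_pow_add_dvd_mul (hp : p.Prime) {a b r s : ℕ}
    (h : p ^ (r + s) ∣ a * b) : p ^ r ∣ a ∨ p ^ (s + 1) ∣ b := by
  obtain ⟨u, v, hu, hv, huv⟩ := Nat.dvd_mul.1 h
  obtain ⟨i, -, rfl⟩ := (Nat.dvd_prime_pow hp).1 (Dvd.intro v huv)
  obtain ⟨j, -, rfl⟩ := (Nat.dvd_prime_pow hp).1 (Dvd.intro_left _ huv)
  have hij : i + j = r + s := Nat.pow_right_injective hp.two_le (by simpa only [pow_add] using huv)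
  rcases le_or_gt r i with hi | hi
  · exact .inl ((pow_dvd_pow p hi).trans hu)
  · exact .inr ((pow_dvd_pow p (by omega)).trans hv)

theorem lt_pow_of_dvd_sigma_one_prime_pow_succ (hp : p.Prime) (hp_odd : Odd p) {q j : ℕ}
    (hj : Odd j) (hq : q ∣ σ 1 (p ^ (j + 1))) (hpq : p ∣ q + 1) : q < p ^ j := by
  obtain ⟨k, hk⟩ := hq
  have k_odd : Odd k :=
    (Nat.odd_mul.1 (hk ▸ (odd_sigma_one_prime_pow_iff hp hp_odd).2 hj.add_one)).2
  have p_dvd : p ∣ k + 1 := by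
    rw [sigma_one_apply_prime_pow hp, geom_sum_succ] at hk
    set s := ∑ i ∈ Finset.range (j + 1), p ^ i
    have hsum : p * s + (k + 1) = (q + 1) * k := by linear_combination hk
    exact (Nat.dvd_add_right (Dvd.intro s rfl)).1 (hsum ▸ hpq.mul_right k)
  have two_p_le : 2 * p ≤ k + 1 := Nat.le_of_dvd k.succ_pos <|
    (Nat.coprime_two_left.2 hp_odd).mul_dvd_of_dvd_of_dvd k_odd.add_one.two_dvd p_dvd
  have hp3 : 3 ≤ p := three_le_of_prime_of_odd hp hp_odd
  by_contra! hle
  have hgeom := mul_sigma_one_prime_pow_add_one hp (j + 1)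
  rw [hk] at hgeom
  have hlt : q * (p * k) < q * (k + p ^ 2) := by
    calc q * (p * k) < q * k + p ^ (j + 1 + 1) := by linarith
      _ = q * k + p ^ j * p ^ 2 := by ring
      _ ≤ q * k + q * p ^ 2 := by gcongr
      _ = q * (k + p ^ 2) := by ring
  have := lt_of_mul_lt_mul_left hlt q.zero_le
  nlinarith

theorem not_pow_dvd_add_one_of_dvd_sigma_one_prime_pow_succ (hp : p.Prime) (hp_odd : Odd p)
    {q j : ℕ} (hq_odd : Odd q) (hj : Odd j) (hq : q ∣ σ 1 (p ^ (j + 1))) :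
    ¬ p ^ j ∣ q + 1 := by
  intro hdvd
  have hlt := lt_pow_of_dvd_sigma_one_prime_pow_succ hp hp_odd hj hq
    ((dvd_pow_self p hj.pos.ne').trans hdvd)
  have heq : q + 1 = p ^ j := le_antisymm hlt (Nat.le_of_dvd q.succ_pos hdvd)
  exact Nat.not_even_iff_odd.2 hp_odd.pow (heq ▸ hq_odd.add_one)

end PrimePow

theorem prime_pow_dvd_sigma_one_of_perfect {p e n : ℕ} (hp : p.Prime) (hpn : p.Coprime n)
    (hN : (p ^ e * n).Perfect) : p ^ e ∣ σ 1 n := by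
  have hσ : σ 1 (p ^ e) * σ 1 n = p ^ e * (2 * n) := by
    rw [← isMultiplicative_sigma.map_mul_of_coprime (hpn.pow_left e), sigma_one_of_perfect hN]
    ring
  exact ((coprime_sigma_one_prime_pow hp e).pow_left e).dvd_of_dvd_mul_left ⟨_, hσ⟩

theorem sq_dvd_sigma_one_of_perfect {p q j n : ℕ} (hp : p.Prime) (hp_odd : Odd p)
    (hq : q.Prime) (hq_odd : Odd q) (hj : Odd j) (hpqn : p.Coprime (q * n)) (hqn : q.Coprime n)
    (hN : (p ^ (j + 1) * (q * n)).Perfect) (hdvd : q ∣ σ 1 (p ^ (j + 1))) :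
    p ^ 2 ∣ σ 1 n := by
  have h := prime_pow_dvd_sigma_one_of_perfect hp hpqn hN
  rw [isMultiplicative_sigma.map_mul_of_coprime hqn, sigma_one_prime hq] at h
  exact (pow_dvd_or_pow_succ_dvd_of_pow_add_dvd_mul hp h).resolve_left
    (not_pow_dvd_add_one_of_dvd_sigma_one_prime_pow_succ hp hp_odd hq_odd hj hdvd)

theorem even_factorization_or_of_not_four_dvd_sigma_one {N p r : ℕ} (hN : Odd N)
    (hσ : ¬ 4 ∣ σ 1 N) (hpr : p ≠ r) : Even (N.factorization p) ∨ Even (N.factorization r) := by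
  contrapose! hσ
  simp only [Nat.not_even_iff_odd] at hσ
  have mem_of_odd {s : ℕ} (hs : Odd (N.factorization s)) : s ∈ N.primeFactors :=
    Nat.support_factorization N ▸ Finsupp.mem_support_iff.2 hs.pos.ne'
  have two_dvd {s : ℕ} (hs : Odd (N.factorization s)) :
      2 ∣ σ 1 (s ^ N.factorization s) := by
    have hmem := mem_of_odd hs
    rw [← even_iff_two_dvd, ← Nat.not_odd_iff_even,
      odd_sigma_one_prime_pow_iff (Nat.prime_of_mem_primeFactors hmem)
        (hN.of_dvd_nat (Nat.dvd_of_mem_primeFactors hmem)), Nat.not_even_iff_odd]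
    exact hs
  calc 4 = 2 * 2 := rfl
    _ ∣ σ 1 (p ^ N.factorization p) * σ 1 (r ^ N.factorization r) :=
      mul_dvd_mul (two_dvd hσ.1) (two_dvd hσ.2)
    _ = ∏ s ∈ {p, r}, σ 1 (s ^ N.factorization s) :=
      (Finset.prod_pair (f := fun s => σ 1 (s ^ N.factorization s)) hpr).symm
    _ ∣ ∏ s ∈ N.primeFactors, σ 1 (s ^ N.factorization s) := by
      refine Finset.prod_dvd_prod_of_subset _ _ _ ?_
      simp only [Finset.insert_subset_iff, Finset.singleton_subset_iff]
      exact ⟨mem_of_odd hσ.1, mem_of_odd hσ.2⟩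
    _ = σ 1 N := (isMultiplicative_sigma.multiplicative_factorization _ hN.pos.ne').symm

theorem coprime_of_eq_pow_factorization_mul {N p n : ℕ} (hp : p.Prime) (hN : N ≠ 0)
    (h : N = p ^ N.factorization p * n) : p.Coprime n := by
  rw [hp.coprime_iff_not_dvd]
  rintro ⟨k, rfl⟩
  exact Nat.pow_succ_factorization_not_dvd hN hp ⟨k, h.trans (by ring)⟩

theorem factorization_eq_one_or_sq_dvd {N p : ℕ} (hp : p ∈ N.primeFactors) :
    N.factorization p = 1 ∨ p ^ 2 ∣ N := by
  have hp0 : N.factorization p ≠ 0 := Finsupp.mem_support_iff.1 hp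
  rw [or_iff_not_imp_left]
  exact fun hp1 => (pow_dvd_pow p (by omega)).trans (Nat.ordProj_dvd N p)

theorem even_factorization_of_factorization_eq_one {N q p : ℕ} (hodd : Odd N)
    (hperf : N.Perfect) (hq : N.factorization q = 1) (hqp : q ≠ p) :
    Even (N.factorization p) := by
  have not_four_dvd : ¬ 4 ∣ σ 1 N := by
    rw [sigma_one_of_perfect hperf]
    obtain ⟨k, rfl⟩ := hodd
    omega
  refine (even_factorization_or_of_not_four_dvd_sigma_one hodd not_four_dvd hqp).resolve_left ?_
  simp [hq]

theorem not_sq_dvd_add_one_mul {q k x y : ℕ} (hy : y.Prime) (hxy : x + 1 < y)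
    (hqk : q * k = x ^ 2 + x + 1) : ¬ y ^ 2 ∣ (q + 1) * k := by
  intro hdvd
  have hk : 0 < k := Nat.pos_of_ne_zero (by rintro rfl; simp at hqk)
  rcases pow_dvd_or_pow_succ_dvd_of_pow_add_dvd_mul (r := 1) (s := 1) hy hdvd with hyq | hyk
  · have hxq : x + 1 ≤ q := by
      have := Nat.le_of_dvd q.succ_pos (pow_one y ▸ hyq)
      omega
    have hkx : k ≤ x + 1 := by by_contra! hlt; nlinarith
    have := Nat.le_of_dvd (by positivity) hdvd
    nlinarith
  · have : y ^ 2 ≤ x ^ 2 + x + 1 :=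
      Nat.le_of_dvd (by positivity) (hyk.trans (Dvd.intro_left q hqk))
    nlinarith

theorem add_one_lt_of_sq_dvd_sigma_one_prime_sq {x y : ℕ} (hx : x.Prime) (hy : y.Prime)
    (hx_odd : Odd x) (hy_odd : Odd y) (hdvd : x ^ 2 ∣ σ 1 (y ^ 2)) : x + 1 < y := by
  have hne : x ≠ y := by
    rintro rfl
    exact (hx.coprime_iff_not_dvd.1 (coprime_sigma_one_prime_pow hx 2))
      ((dvd_pow_self x two_ne_zero).trans hdvd)
  have hle : x ≤ y := by
    rw [sigma_one_prime_sq hy] at hdvd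
    have := Nat.le_of_dvd (by positivity) hdvd
    have := hy.pos
    by_contra! hlt
    nlinarith
  obtain ⟨i, rfl⟩ := hx_odd
  obtain ⟨j, rfl⟩ := hy_odd
  omega

theorem mul_pow_five_le_of_sq_le {x y R : ℕ} (hx : x ^ 2 ≤ 2 * R) (hy : y ^ 2 ≤ R) :
    x * y ^ 5 ≤ 2 * R ^ 3 := by
  refine (Nat.pow_le_pow_iff_left two_ne_zero).1 ?_
  calc (x * y ^ 5) ^ 2 = x ^ 2 * (y ^ 2) ^ 5 := by ring
    _ ≤ 2 * R * R ^ 5 := by gcongr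
    _ = 2 * (R * R ^ 5) := by ring
    _ ≤ 4 * (R * R ^ 5) := by gcongr; norm_num
    _ = (2 * R ^ 3) ^ 2 := by ring

theorem pow_three_mul_pow_five_le_of_sq_le {x y R : ℕ} (hx : x ^ 2 ≤ 2 * R) (hy : y ^ 4 ≤ R) :
    x ^ 3 * y ^ 5 ≤ 3 * R ^ 3 := by
  rcases y.eq_zero_or_pos with rfl | y_pos
  · simp
  refine (Nat.pow_le_pow_iff_left two_ne_zero).1 ?_
  calc (x ^ 3 * y ^ 5) ^ 2 = (x ^ 2) ^ 3 * y ^ 10 := by ring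
    _ ≤ (2 * R) ^ 3 * y ^ 12 := by gcongr; omega
    _ = 8 * R ^ 3 * (y ^ 4) ^ 3 := by ring
    _ ≤ 8 * R ^ 3 * R ^ 3 := by gcongr
    _ ≤ 9 * R ^ 3 * R ^ 3 := by gcongr; omega
    _ = (3 * R ^ 3) ^ 2 := by ring

theorem mul_pow_five_lt_of_two_mul_lt {q x y e R : ℕ} (hq0 : 0 < q) (hx : 0 < x) (hy : 0 < y)
    (hq : 2 * q < 3 * x ^ e) (hR : 9 * (x * y) ^ 5 ≤ 32 * (x ^ e * R ^ 3)) :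
    (q * x * y) ^ 5 < (2 * (q * (x ^ e * R))) ^ 3 := by
  refine lt_of_mul_lt_mul_left (a := 4) ?_ (by norm_num)
  calc 4 * (q * x * y) ^ 5 = q ^ 3 * ((2 * q) ^ 2 * (x * y) ^ 5) := by ring
    _ < q ^ 3 * ((3 * x ^ e) ^ 2 * (x * y) ^ 5) := by gcongr
    _ = q ^ 3 * ((x ^ e) ^ 2 * (9 * (x * y) ^ 5)) := by ring
    _ ≤ q ^ 3 * ((x ^ e) ^ 2 * (32 * (x ^ e * R ^ 3))) := by gcongr
    _ = 4 * (2 * (q * (x ^ e * R))) ^ 3 := by ring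

theorem mul_pow_five_lt_of_sq_dvd {N a b c : ℕ} (hN : N ≠ 0) (hab : a.Coprime b)
    (hac : a.Coprime c) (hbc : b.Coprime c) (ha : a ^ 2 ∣ N) (hb : b ^ 2 ∣ N) (hc : c ^ 2 ∣ N) :
    (a * b * c) ^ 5 < (2 * N) ^ 3 := by
  have hdvd : (a * b * c) ^ 2 ∣ N := by
    rw [mul_pow _ c, mul_pow a]
    exact ((hac.pow 2 2).mul_left (hbc.pow 2 2)).mul_dvd_of_dvd_of_dvd
      ((hab.pow 2 2).mul_dvd_of_dvd_of_dvd ha hb) hc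
  have N_pos : 0 < N := Nat.pos_of_ne_zero hN
  have abc_pos : 0 < a * b * c :=
    Nat.pos_of_dvd_of_pos ((dvd_pow_self _ two_ne_zero).trans hdvd) N_pos
  calc (a * b * c) ^ 5 ≤ (a * b * c) ^ 6 := Nat.pow_le_pow_right abc_pos (by norm_num)
    _ = ((a * b * c) ^ 2) ^ 3 := by ring
    _ ≤ N ^ 3 := by gcongr; exact Nat.le_of_dvd N_pos hdvd
    _ < (2 * N) ^ 3 := by gcongr; omega

/-- A splitting `N = q * x ^ e * y ^ f * m` of an odd perfect number at three distinct primes, with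
`q` dividing `N` exactly once and positive even exponents at `x` and `y`. The three coprimality
fields say that `q`, `x ^ e` and `y ^ f` are the full powers of `q`, `x` and `y` in `N`. -/
structure EulerSplitting (N q x y e f m : ℕ) : Prop where
  odd : Odd N
  perfect : N.Perfect
  eq_mul : N = q * x ^ e * y ^ f * m
  prime_q : q.Prime
  prime_x : x.Prime
  prime_y : y.Prime
  coprime_q : q.Coprime (x ^ e * (y ^ f * m))
  coprime_x : x.Coprime (q * (y ^ f * m))
  coprime_y : y.Coprime (q * (x ^ e * m))
  even_e : Even e
  even_f : Even f
  e_ne_zero : e ≠ 0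
  f_ne_zero : f ≠ 0

namespace EulerSplitting

variable {N q x y e f m : ℕ}

theorem swap (h : EulerSplitting N q x y e f m) : EulerSplitting N q y x f e m where
  odd := h.odd
  perfect := h.perfect
  eq_mul := by rw [h.eq_mul]; ring
  prime_q := h.prime_q
  prime_x := h.prime_y
  prime_y := h.prime_x
  coprime_q := by rw [mul_left_comm]; exact h.coprime_q
  coprime_x := h.coprime_y
  coprime_y := h.coprime_x
  even_e := h.even_f
  even_f := h.even_e
  e_ne_zero := h.f_ne_zero
  f_ne_zero := h.e_ne_zero

theorem eq_mul_x (h : EulerSplitting N q x y e f m) : N = x ^ e * (q * (y ^ f * m)) := by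
  rw [h.eq_mul]; ring

theorem odd_q (h : EulerSplitting N q x y e f m) : Odd q :=
  h.odd.of_dvd_nat ⟨x ^ e * y ^ f * m, by rw [h.eq_mul]; ring⟩

theorem odd_x (h : EulerSplitting N q x y e f m) : Odd x :=
  h.odd.of_dvd_nat <| h.eq_mul_x ▸ (dvd_pow_self x h.e_ne_zero).mul_right _

theorem m_pos (h : EulerSplitting N q x y e f m) : 0 < m := by
  have hN := h.odd.pos
  rw [h.eq_mul] at hN
  exact Nat.pos_of_mul_pos_left hN

theorem coprime_y_m (h : EulerSplitting N q x y e f m) : y.Coprime m :=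
  h.coprime_y.coprime_mul_left_right.coprime_mul_left_right

theorem coprime_q_rest (h : EulerSplitting N q x y e f m) : q.Coprime (y ^ f * m) :=
  h.coprime_q.coprime_mul_left_right

theorem dvd_sigma_one_or (h : EulerSplitting N q x y e f m) :
    q ∣ σ 1 (x ^ e) ∨ q ∣ σ 1 (y ^ f) ∨ q ∣ σ 1 m := by
  have hN : N = q ^ 1 * (x ^ e * (y ^ f * m)) := by rw [h.eq_mul]; ring
  have hq := prime_pow_dvd_sigma_one_of_perfect h.prime_q h.coprime_q (hN ▸ h.perfect)
  rw [isMultiplicative_sigma.map_mul_of_coprime (h.coprime_x.coprime_mul_left_right.pow_left e),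
    isMultiplicative_sigma.map_mul_of_coprime (h.coprime_y_m.pow_left f), pow_one] at hq
  simpa only [h.prime_q.dvd_mul] using hq

theorem sq_x_dvd_sigma_one (h : EulerSplitting N q x y e f m) (hq : q ∣ σ 1 (x ^ e)) :
    x ^ 2 ∣ σ 1 (y ^ f * m) := by
  obtain ⟨j, rfl⟩ := Nat.exists_eq_succ_of_ne_zero h.e_ne_zero
  have hj : Odd j := by simpa [Nat.even_add_one] using h.even_e
  exact sq_dvd_sigma_one_of_perfect h.prime_x h.odd_x h.prime_q h.odd_q hj h.coprime_x
    h.coprime_q_rest (h.eq_mul_x ▸ h.perfect) hq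

theorem sq_x_le (h : EulerSplitting N q x y e f m) (hq : q ∣ σ 1 (x ^ e)) :
    x ^ 2 ≤ 2 * (y ^ f * m) := by
  have hdvd : y ^ f * m ∣ N := ⟨q * x ^ e, by rw [h.eq_mul]; ring⟩
  have hpos : 0 < y ^ f * m := Nat.pos_of_dvd_of_pos hdvd h.odd.pos
  exact (Nat.le_of_dvd (sigma_pos_iff.2 hpos) (h.sq_x_dvd_sigma_one hq)).trans
    (sigma_one_le_of_dvd_perfect h.perfect hdvd)

theorem le_two_mul_of_dvd_sigma_one_m (h : EulerSplitting N q x y e f m) {d : ℕ}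
    (hd : d ∣ σ 1 m) : d ≤ 2 * m :=
  (Nat.le_of_dvd (sigma_pos_iff.2 h.m_pos) hd).trans
    (sigma_one_le_of_dvd_perfect h.perfect ⟨q * x ^ e * y ^ f, by rw [h.eq_mul]; ring⟩)

theorem x_le_two_mul_m (h : EulerSplitting N q x y 2 2 m) (hq : q ∣ σ 1 (x ^ 2)) :
    x ≤ 2 * m := by
  have hx := h.sq_x_dvd_sigma_one hq
  rw [isMultiplicative_sigma.map_mul_of_coprime (h.coprime_y_m.pow_left 2), mul_comm] at hx
  rcases pow_dvd_or_pow_succ_dvd_of_pow_add_dvd_mul (r := 1) (s := 1) h.prime_x hx with hxm | hxy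
  · exact h.le_two_mul_of_dvd_sigma_one_m (pow_one x ▸ hxm)
  have x_lt_y := add_one_lt_of_sq_dvd_sigma_one_prime_sq h.prime_x h.prime_y h.odd_x
    h.swap.odd_x hxy
  obtain ⟨k, hk⟩ := hq
  have hy : y ^ 2 ∣ σ 1 m * (q * ((q + 1) * k)) := by
    have := prime_pow_dvd_sigma_one_of_perfect h.prime_y h.coprime_y
      (h.swap.eq_mul_x ▸ h.perfect)
    rw [isMultiplicative_sigma.map_mul_of_coprime h.swap.coprime_q_rest, sigma_one_prime h.prime_q,
      isMultiplicative_sigma.map_mul_of_coprime (h.swap.coprime_y_m.pow_left 2), hk] at this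
    convert this using 1
    ring
  rcases pow_dvd_or_pow_succ_dvd_of_pow_add_dvd_mul (r := 1) (s := 1) h.prime_y hy with hym | hyq
  · have := h.le_two_mul_of_dvd_sigma_one_m (pow_one y ▸ hym)
    omega
  · have hyqk : y ^ 2 ∣ (q + 1) * k :=
      (h.coprime_y.coprime_mul_right_right.pow_left 2).dvd_of_dvd_mul_left hyq
    rw [sigma_one_prime_sq h.prime_x] at hk
    exact absurd hyqk (not_sq_dvd_add_one_mul h.prime_y x_lt_y hk.symm)

theorem eq_two_or_four_le (h : EulerSplitting N q x y e f m) : e = 2 ∨ 4 ≤ e := by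
  obtain ⟨r, rfl⟩ := h.even_e
  have := h.e_ne_zero
  omega

theorem two_le_e (h : EulerSplitting N q x y e f m) : 2 ≤ e := by
  have := h.eq_two_or_four_le
  omega

theorem nine_mul_pow_five_le (h : EulerSplitting N q x y e f m) (hq : q ∣ σ 1 (x ^ e)) :
    9 * (x * y) ^ 5 ≤ 32 * (x ^ e * (y ^ f * m) ^ 3) := by
  have y_pow_le {j : ℕ} (hj : j ≤ f) : y ^ j ≤ y ^ f * m :=
    (Nat.pow_le_pow_right h.prime_y.pos hj).trans (Nat.le_mul_of_pos_right _ h.m_pos)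
  have hx := h.sq_x_le hq
  rcases h.eq_two_or_four_le with rfl | he
  · rcases h.swap.eq_two_or_four_le with rfl | hf
    · have hy3 := three_le_of_prime_of_odd h.prime_y h.swap.odd_x
      have hxm := h.x_le_two_mul_m hq
      calc 9 * (x * y) ^ 5 = 3 * x ^ 2 * y ^ 5 * (3 * x ^ 3) := by ring
        _ ≤ 3 * x ^ 2 * y ^ 5 * (y * (2 * m) ^ 3) := by gcongr
        _ ≤ 32 * (x ^ 2 * (y ^ 2 * m) ^ 3) := by
          linarith [Nat.zero_le (x ^ 2 * (y ^ 2 * m) ^ 3)]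
    · have hxy := pow_three_mul_pow_five_le_of_sq_le hx (y_pow_le hf)
      calc 9 * (x * y) ^ 5 = 9 * (x ^ 2 * (x ^ 3 * y ^ 5)) := by ring
        _ ≤ 9 * (x ^ 2 * (3 * (y ^ f * m) ^ 3)) := by gcongr
        _ ≤ 32 * (x ^ 2 * (y ^ f * m) ^ 3) := by
          linarith [Nat.zero_le (x ^ 2 * (y ^ f * m) ^ 3)]
  · have hxy := mul_pow_five_le_of_sq_le hx (y_pow_le h.swap.two_le_e)
    have x_pos := h.prime_x.pos
    calc 9 * (x * y) ^ 5 = 9 * (x ^ 4 * (x * y ^ 5)) := by ring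
      _ ≤ 9 * (x ^ e * (2 * (y ^ f * m) ^ 3)) := by gcongr
      _ ≤ 32 * (x ^ e * (y ^ f * m) ^ 3) := by linarith [Nat.zero_le (x ^ e * (y ^ f * m) ^ 3)]

theorem mul_pow_five_lt_of_dvd_sigma_one_x (h : EulerSplitting N q x y e f m)
    (hq : q ∣ σ 1 (x ^ e)) : (q * x * y) ^ 5 < (2 * N) ^ 3 := by
  have two_mul_q_lt : 2 * q < 3 * x ^ e := by
    have hx3 := three_le_of_prime_of_odd h.prime_x h.odd_x
    have hσ := two_mul_sigma_one_prime_pow_lt h.prime_x hx3 e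
    have := Nat.le_of_dvd (sigma_pos_iff.2 (pow_pos h.prime_x.pos e)) hq
    omega
  have hN : N = q * (x ^ e * (y ^ f * m)) := by rw [h.eq_mul]; ring
  rw [hN]
  exact mul_pow_five_lt_of_two_mul_lt h.prime_q.pos h.prime_x.pos h.prime_y.pos two_mul_q_lt
    (h.nine_mul_pow_five_le hq)

theorem mul_pow_five_lt_of_dvd_sigma_one_m (h : EulerSplitting N q x y e f m)
    (hq : q ∣ σ 1 m) : (q * x * y) ^ 5 < (2 * N) ^ 3 := by
  have q_le := h.le_two_mul_of_dvd_sigma_one_m hq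
  have hq0 := h.prime_q.pos
  have hx := h.prime_x.pos
  have hy := h.prime_y.pos
  have hxy : 0 < x * y := Nat.mul_pos hx hy
  have hm := h.m_pos
  calc (q * x * y) ^ 5 = q ^ 3 * (q ^ 2 * (x * y) ^ 5) := by ring
    _ ≤ q ^ 3 * ((2 * m) ^ 2 * (x * y) ^ 6) := by gcongr; norm_num
    _ = 4 * (q ^ 3 * (x * y) ^ 6 * m ^ 2) := by ring
    _ < 8 * (q ^ 3 * (x * y) ^ 6 * m ^ 3) := by
      refine Nat.mul_lt_mul_of_lt_of_le (by norm_num) ?_ (by positivity)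
      gcongr; omega
    _ = (2 * (q * x ^ 2 * y ^ 2 * m)) ^ 3 := by ring
    _ ≤ (2 * (q * x ^ e * y ^ f * m)) ^ 3 := by
      have he := h.two_le_e
      have hf := h.swap.two_le_e
      gcongr
    _ = (2 * N) ^ 3 := by rw [h.eq_mul]

theorem mul_pow_five_lt (h : EulerSplitting N q x y e f m) : (q * x * y) ^ 5 < (2 * N) ^ 3 := by
  rcases h.dvd_sigma_one_or with hq | hq | hq
  · exact h.mul_pow_five_lt_of_dvd_sigma_one_x hq
  · exact mul_right_comm q x y ▸ h.swap.mul_pow_five_lt_of_dvd_sigma_one_x hq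
  · exact h.mul_pow_five_lt_of_dvd_sigma_one_m hq

end EulerSplitting

theorem exists_eulerSplitting {N q x y : ℕ} (hodd : Odd N) (hperf : N.Perfect)
    (hq : q ∈ N.primeFactors) (hx : x ∈ N.primeFactors) (hy : y ∈ N.primeFactors)
    (hqx : q ≠ x) (hqy : q ≠ y) (hxy : x ≠ y) (hq1 : N.factorization q = 1) :
    ∃ m, EulerSplitting N q x y (N.factorization x) (N.factorization y) m := by
  have hN := hodd.pos.ne'
  have prime_q := Nat.prime_of_mem_primeFactors hq
  have prime_x := Nat.prime_of_mem_primeFactors hx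
  have prime_y := Nat.prime_of_mem_primeFactors hy
  have coprime_qx := (Nat.coprime_primes prime_q prime_x).2 hqx
  have coprime_qy := (Nat.coprime_primes prime_q prime_y).2 hqy
  have coprime_xy := (Nat.coprime_primes prime_x prime_y).2 hxy
  obtain ⟨m, hm⟩ : q * x ^ N.factorization x * y ^ N.factorization y ∣ N :=
    ((coprime_qy.mul_left (coprime_xy.pow_left _)).pow_right _).mul_dvd_of_dvd_of_dvd
      ((coprime_qx.pow_right _).mul_dvd_of_dvd_of_dvd (Nat.dvd_of_mem_primeFactors hq)
        (Nat.ordProj_dvd N x)) (Nat.ordProj_dvd N y)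
  refine ⟨m, hodd, hperf, hm, prime_q, prime_x, prime_y,
    coprime_of_eq_pow_factorization_mul prime_q hN ?_,
    coprime_of_eq_pow_factorization_mul prime_x hN ?_,
    coprime_of_eq_pow_factorization_mul prime_y hN ?_,
    even_factorization_of_factorization_eq_one hodd hperf hq1 hqx,
    even_factorization_of_factorization_eq_one hodd hperf hq1 hqy,
    Finsupp.mem_support_iff.1 hx, Finsupp.mem_support_iff.1 hy⟩
  · rw [hq1, pow_one, ← mul_assoc, ← mul_assoc]
    exact hm
  · exact hm.trans (by ring)
  · exact hm.trans (by ring)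

theorem mul_pow_five_lt_of_factorization_eq_one {N q x y : ℕ} (hodd : Odd N) (hperf : N.Perfect)
    (hq : q ∈ N.primeFactors) (hx : x ∈ N.primeFactors) (hy : y ∈ N.primeFactors)
    (hqx : q ≠ x) (hqy : q ≠ y) (hxy : x ≠ y) (hq1 : N.factorization q = 1) :
    (q * x * y) ^ 5 < (2 * N) ^ 3 :=
  have ⟨_, h⟩ := exists_eulerSplitting hodd hperf hq hx hy hqx hqy hxy hq1
  h.mul_pow_five_lt

theorem stmt_2_general {N a b c : ℕ} (hodd : Odd N) (hperf : N.Perfect)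
    (ha : a ∈ N.primeFactors) (hb : b ∈ N.primeFactors) (hc : c ∈ N.primeFactors)
    (hab : a ≠ b) (hac : a ≠ c) (hbc : b ≠ c) : (a * b * c) ^ 5 < (2 * N) ^ 3 := by
  rcases factorization_eq_one_or_sq_dvd ha with ha1 | ha2
  · exact mul_pow_five_lt_of_factorization_eq_one hodd hperf ha hb hc hab hac hbc ha1
  rcases factorization_eq_one_or_sq_dvd hb with hb1 | hb2
  · rw [mul_comm a b]
    exact mul_pow_five_lt_of_factorization_eq_one hodd hperf hb ha hc hab.symm hbc hac hb1
  rcases factorization_eq_one_or_sq_dvd hc with hc1 | hc2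
  · rw [mul_comm (a * b) c, ← mul_assoc]
    exact mul_pow_five_lt_of_factorization_eq_one hodd hperf hc ha hb hac.symm hbc.symm hab hc1
  have coprime_of_ne {p r : ℕ} (hp : p ∈ N.primeFactors) (hr : r ∈ N.primeFactors)
      (hpr : p ≠ r) : p.Coprime r :=
    (Nat.coprime_primes (Nat.prime_of_mem_primeFactors hp) (Nat.prime_of_mem_primeFactors hr)).2 hpr
  exact mul_pow_five_lt_of_sq_dvd hodd.pos.ne' (coprime_of_ne ha hb hab) (coprime_of_ne ha hc hac)
    (coprime_of_ne hb hc hbc) ha2 hb2 hc2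

/-- Let N be an odd perfect number with at least three distinct
prime divisors, with c, b, a its largest, second largest and third largest
prime divisors respectively. Then (abc)^5 < (2N)^3. -/
theorem stmt_2 (N : ℕ) (hodd : Odd N) (hperf : Nat.Perfect N)
    (hk : 3 ≤ N.primeFactors.card)
    (a b c : ℕ)
    (ha : a ∈ N.primeFactors) (hb : b ∈ N.primeFactors) (hc : c ∈ N.primeFactors)
    (ha2 : (N.primeFactors.filter (fun q => a < q)).card = 2)
    (hb1 : (N.primeFactors.filter (fun q => b < q)).card = 1)
    (hc0 : (N.primeFactors.filter (fun q => c < q)).card = 0) :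
    (a * b * c) ^ 5 < (2 * N) ^ 3 := by
  exact stmt_2_general hodd hperf ha hb hc (by rintro rfl; omega) (by rintro rfl; omega)
    (by rintro rfl; omega)
end

section
/- If p and q are positive odd integers such that q divides p² + p + 1 and p divides q + 1, then (p, q) = (1, 1) or (p, q) = (1, 3). -/
/-!
Write `p ^ 2 + p + 1 = q * k`. Modulo `p` this reads `q * k ≡ 1`, so `q ≡ -1` forces `k ≡ -1`: the
cofactor `k` satisfies the same conditions as `q`. Both are odd, being divisors of an odd number, so
for odd `p` each of `q + 1` and `k + 1` is a multiple of `2 * p`. Then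
`(2 * p - 1) ^ 2 ≤ q * k = p ^ 2 + p + 1`, which is impossible for `p ≥ 2`.
-/

theorem dvd_add_one_of_dvd_mul_sub_one {R : Type*} [Ring R] {d a b : R}
    (ha : d ∣ a + 1) (hab : d ∣ a * b - 1) : d ∣ b + 1 := by
  have hsub : d ∣ (a + 1) * b - (a * b - 1) := dvd_sub (ha.mul_right b) hab
  have heq : (a + 1) * b - (a * b - 1) = b + 1 := by noncomm_ring
  rwa [heq] at hsub

theorem odd_sq_add_self_add_one (n : ℕ) : Odd (n ^ 2 + n + 1) := by
  have heven : Even (n * (n + 1)) := Nat.even_mul_succ_self n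
  rw [show n ^ 2 + n = n * (n + 1) by ring]
  exact heven.add_one

theorem two_mul_le_add_one_of_odd_of_dvd {p n : ℕ} (hp : Odd p) (hn : Odd n)
    (h : p ∣ n + 1) : 2 * p ≤ n + 1 :=
  have hdvd : 2 * p ∣ n + 1 := hp.coprime_two_left.mul_dvd_of_dvd_of_dvd hn.add_one.two_dvd h
  Nat.le_of_dvd n.succ_pos hdvd

theorem le_one_of_mul_eq_sq_add_self_add_one {p a b : ℕ} (ha : 2 * p ≤ a + 1)
    (hb : 2 * p ≤ b + 1) (hab : a * b = p ^ 2 + p + 1) : p ≤ 1 := by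
  by_contra! hp
  zify at *
  have hmul : (2 * p - 1 : ℤ) * (2 * p - 1) ≤ a * b :=
    mul_le_mul (by linarith) (by linarith) (by linarith) (by linarith)
  nlinarith

theorem eq_one_of_odd_of_dvd_sq_add_self_add_one {p q : ℕ} (hp : Odd p)
    (hq : q ∣ p ^ 2 + p + 1) (hpq : p ∣ q + 1) : p = 1 := by
  obtain ⟨k, hk⟩ := hq
  have hodd : Odd (q * k) := hk ▸ odd_sq_add_self_add_one p
  obtain ⟨hqodd, hkodd⟩ := Nat.odd_mul.mp hodd
  have hqk : (p : ℤ) ∣ q * k - 1 := by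
    zify at hk
    exact ⟨p + 1, by linear_combination -hk⟩
  have hpk : p ∣ k + 1 := by
    zify at hpq ⊢
    exact dvd_add_one_of_dvd_mul_sub_one hpq hqk
  have hle : p ≤ 1 := le_one_of_mul_eq_sq_add_self_add_one
    (two_mul_le_add_one_of_odd_of_dvd hp hqodd hpq)
    (two_mul_le_add_one_of_odd_of_dvd hp hkodd hpk) hk.symm
  exact le_antisymm hle hp.pos

/-- If p and q are positive odd integers such that q ∣ p² + p + 1
and p ∣ q + 1, then (p, q) = (1, 1) or (p, q) = (1, 3). -/
theorem stmt_4 (p q : ℕ) (hp : 0 < p) (hq : 0 < q) (hpodd : Odd p) (hqodd : Odd q)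
    (h1 : q ∣ p ^ 2 + p + 1) (h2 : p ∣ q + 1) :
    (p = 1 ∧ q = 1) ∨ (p = 1 ∧ q = 3) := by
  obtain rfl : p = 1 := eq_one_of_odd_of_dvd_sq_add_self_add_one hpodd h1 h2
  have hq13 : q = 1 ∨ q = 3 := (Nat.dvd_prime Nat.prime_three).mp h1
  exact hq13.imp (⟨rfl, ·⟩) (⟨rfl, ·⟩)
end

section
/- Let p and q be positive integers. Then p divides q² + q + 1 and q divides p² + p + 1 if and only if 5pq = p² + q² + p + q + 1. -/
/-!
If `p ∣ q² + aq + 1` and `q ∣ p² + ap + 1`, then `p` and `q` are coprime, so the conditions combine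
into `p² + q² + a(p + q) + 1 = pqk` for some `k`. For fixed `k` and `q` this is a monic quadratic in
`p`, whose other root `c` satisfies `pc = q² + aq + 1`. For `a ≤ 1` and `q < p` the product is less
than `(q + 1)²`, so `c ≤ q`, and replacing `(p, q)` by `(q, c)` lowers the maximum without
changing `k`. The descent can only stop at `p = q`, where `p ∣ 1` and `k = 2a + 3`.
-/

section Divisibility

variable {a p q : ℕ}

lemma dvd_sq_add_sq_add_iff {b : ℕ} :
    p ∣ p ^ 2 + q ^ 2 + a * (p + q) + b ↔ p ∣ q ^ 2 + a * q + b := by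
  rw [show p ^ 2 + q ^ 2 + a * (p + q) + b = p * (p + a) + (q ^ 2 + a * q + b) by ring]
  exact Nat.dvd_add_right (dvd_mul_right p _)

lemma coprime_of_dvd_sq_add_mul_add_one (h : p ∣ q ^ 2 + a * q + 1) : p.Coprime q := by
  refine Nat.Coprime.coprime_dvd_left h ?_
  rw [show q ^ 2 + a * q + 1 = (q + a) * q + 1 by ring]
  simp

lemma mul_dvd_sq_add_sq_add_one_iff :
    p * q ∣ p ^ 2 + q ^ 2 + a * (p + q) + 1 ↔
      p ∣ q ^ 2 + a * q + 1 ∧ q ∣ p ^ 2 + a * p + 1 := by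
  have dvd_right_iff : q ∣ p ^ 2 + q ^ 2 + a * (p + q) + 1 ↔ q ∣ p ^ 2 + a * p + 1 := by
    rw [add_comm (p ^ 2), add_comm p, dvd_sq_add_sq_add_iff]
  rw [← dvd_right_iff]
  constructor
  · intro h
    exact ⟨dvd_sq_add_sq_add_iff.mp (dvd_of_mul_right_dvd h), dvd_of_mul_left_dvd h⟩
  · rintro ⟨hp, hq⟩
    exact (coprime_of_dvd_sq_add_mul_add_one hp).mul_dvd_of_dvd_of_dvd
      (dvd_sq_add_sq_add_iff.mpr hp) hq

end Divisibility

lemma vieta_jump {R : Type*} [CommSemiring R] [IsLeftCancelMulZero R] {a b c k p q : R}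
    (hp : p ≠ 0) (h : p ^ 2 + q ^ 2 + a * (p + q) + b = p * q * k)
    (hc : q ^ 2 + a * q + b = p * c) :
    q ^ 2 + c ^ 2 + a * (q + c) + b = q * c * k := by
  have root_sum : p + c + a = q * k := by
    refine mul_left_cancel₀ hp ?_
    calc p * (p + c + a) = p ^ 2 + a * p + p * c := by ring
      _ = p ^ 2 + q ^ 2 + a * (p + q) + b := by rw [← hc]; ring
      _ = p * (q * k) := by rw [h, mul_assoc]
  calc q ^ 2 + c ^ 2 + a * (q + c) + b = (q ^ 2 + a * q + b) + c * (c + a) := by ring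
    _ = c * (p + c + a) := by rw [hc]; ring
    _ = q * c * k := by rw [root_sum]; ring

section Descent

variable {a k p q : ℕ}

lemma exists_le_of_lt_of_sq_add_sq_add_one_eq (ha : a ≤ 1) (hlt : q < p)
    (h : p ^ 2 + q ^ 2 + a * (p + q) + 1 = p * q * k) :
    ∃ c ≤ q, q ^ 2 + c ^ 2 + a * (q + c) + 1 = q * c * k := by
  obtain ⟨c, hc⟩ : p ∣ q ^ 2 + a * q + 1 :=
    dvd_sq_add_sq_add_iff.mp ⟨q * k, by rw [h, mul_assoc]⟩
  refine ⟨c, ?_, vieta_jump (Nat.ne_zero_of_lt hlt) h hc⟩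
  have hq : 0 < q := Nat.pos_of_ne_zero (by rintro rfl; simp at h)
  have product_lt : p * c < (q + 1) * (q + 1) := by
    calc p * c = q ^ 2 + a * q + 1 := hc.symm
      _ ≤ q ^ 2 + 1 * q + 1 := by gcongr
      _ < (q + 1) * (q + 1) := by linarith
  by_contra! hqc
  exact product_lt.not_ge (Nat.mul_le_mul hlt hqc)

lemma eq_two_mul_add_three_of_diagonal (h : p ^ 2 + p ^ 2 + a * (p + p) + 1 = p * p * k) :
    k = 2 * a + 3 := by
  have h_dvd : p ∣ p ^ 2 + a * p + 1 := dvd_sq_add_sq_add_iff.mp ⟨p * k, by rw [h, mul_assoc]⟩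
  obtain rfl : p = 1 := (Nat.coprime_self p).mp (coprime_of_dvd_sq_add_mul_add_one h_dvd)
  linarith

lemma eq_two_mul_add_three_of_le (ha : a ≤ 1) (hle : q ≤ p)
    (h : p ^ 2 + q ^ 2 + a * (p + q) + 1 = p * q * k) : k = 2 * a + 3 := by
  induction p using Nat.strong_induction_on generalizing q with
  | _ p ih =>
    rcases hle.eq_or_lt with rfl | hlt
    · exact eq_two_mul_add_three_of_diagonal h
    · obtain ⟨c, hcq, hc⟩ := exists_le_of_lt_of_sq_add_sq_add_one_eq ha hlt h
      exact ih q hlt hcq hc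

lemma eq_two_mul_add_three_of_sq_add_sq_add_one_eq (ha : a ≤ 1)
    (h : p ^ 2 + q ^ 2 + a * (p + q) + 1 = p * q * k) : k = 2 * a + 3 := by
  rcases le_total q p with hle | hle
  · exact eq_two_mul_add_three_of_le ha hle h
  · exact eq_two_mul_add_three_of_le ha hle (by linarith)

end Descent

theorem stmt_5_general {a p q : ℕ} (ha : a ≤ 1) :
    (p ∣ q ^ 2 + a * q + 1 ∧ q ∣ p ^ 2 + a * p + 1) ↔
      p ^ 2 + q ^ 2 + a * (p + q) + 1 = p * q * (2 * a + 3) := by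
  rw [← mul_dvd_sq_add_sq_add_one_iff]
  constructor
  · rintro ⟨k, hk⟩
    rwa [← eq_two_mul_add_three_of_sq_add_sq_add_one_eq ha hk]
  · exact fun h ↦ ⟨2 * a + 3, h⟩

/-- Let p and q be positive integers. Then p ∣ q² + q + 1 and
q ∣ p² + p + 1 if and only if 5pq = p² + q² + p + q + 1. -/
theorem stmt_5 (p q : ℕ) (hp : 0 < p) (hq : 0 < q) :
    (p ∣ q ^ 2 + q + 1 ∧ q ∣ p ^ 2 + p + 1) ↔
      5 * p * q = p ^ 2 + q ^ 2 + p + q + 1 := by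
  rw [show 5 * p * q = p * q * (2 * 1 + 3) by ring, eq_comm]
  simpa only [one_mul, ← add_assoc] using stmt_5_general (p := p) (q := q) le_rfl
end

section
/- Let (t_n) be the sequence defined by t_1 = t_2 = 1 and t_{n+2} · t_n = t_{n+1}² + t_{n+1} + 1 for all n ≥ 1. If p and q are positive integers with p ≤ q, p | q² + q + 1, and q | p² + p + 1, then there exists n ≥ 1 with p = t_n and q = t_{n+1}. -/
/-!
Vieta jumping. If `(p, q)` is a quasisolution with `p < q`, then `r = (p² + p + 1) / q` satisfies
`r ≤ p`, and `(r, p)` is again a quasisolution because `r` inverts `q` modulo `p` and `x² + x + 1`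
is palindromic. The descent can only stop at a diagonal pair, hence at `(1, 1)`; read backwards,
each jump `(r, p) ↦ (p, q)` satisfies `q * r = p² + p + 1`, which is the recurrence for `t`.
-/

/-- A quasisolution: a pair with `p ∣ q² + q + 1` and `q ∣ p² + p + 1`, the pairs that the descent
runs through. Positivity need not be required, since `0` divides only `0`. -/
structure IsQuasisolution (p q : ℕ) : Prop where
  left_dvd : p ∣ q ^ 2 + q + 1
  right_dvd : q ∣ p ^ 2 + p + 1

theorem dvd_sq_add_mul_add_one_of_dvd_mul_sub_one {R : Type*} [CommRing R] {a p q r : R}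
    (hdvd : p ∣ q ^ 2 + a * q + 1) (hinv : p ∣ q * r - 1) : p ∣ r ^ 2 + a * r + 1 := by
  -- Multiplication by `r²`, the inverse of `q²` modulo `p`, reverses the order of the coefficients.
  have hreverse : r ^ 2 * (q ^ 2 + a * q + 1) =
      (q * r - 1) * (q * r + 1 + a * r) + (r ^ 2 + a * r + 1) := by ring
  exact (dvd_add_right (hinv.mul_right _)).mp (hreverse ▸ hdvd.mul_left (r ^ 2))

namespace IsQuasisolution

variable {p q r : ℕ}

theorem left_pos (h : IsQuasisolution p q) : 0 < p :=
  Nat.pos_of_dvd_of_pos h.left_dvd (Nat.succ_pos _)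

theorem eq_one_of_self (h : IsQuasisolution p p) : p = 1 := by
  have hdvd : p ∣ p ^ 2 + p := (dvd_pow_self p two_ne_zero).add dvd_rfl
  exact Nat.dvd_one.mp ((Nat.dvd_add_right hdvd).mp h.left_dvd)

theorem of_mul_eq (h : IsQuasisolution p q) (hmul : q * r = p ^ 2 + p + 1) :
    IsQuasisolution r p where
  left_dvd := Dvd.intro_left q hmul
  right_dvd := by
    have hinv : (p : ℤ) ∣ q * r - 1 := ⟨p + 1, by zify at hmul; linear_combination hmul⟩
    have hdvd : (p : ℤ) ∣ q ^ 2 + 1 * q + 1 := by simpa only [one_mul] using mod_cast h.left_dvd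
    have hjump := dvd_sq_add_mul_add_one_of_dvd_mul_sub_one hdvd hinv
    rw [one_mul] at hjump
    exact_mod_cast hjump

theorem exists_le_mul_eq (h : IsQuasisolution p q) (hlt : p < q) :
    ∃ r ≤ p, IsQuasisolution r p ∧ q * r = p ^ 2 + p + 1 := by
  obtain ⟨r, hr⟩ := h.right_dvd
  refine ⟨r, ?_, h.of_mul_eq hr.symm, hr.symm⟩
  by_contra! hpr
  have : (p + 1) * (p + 1) ≤ p ^ 2 + p + 1 := hr ▸ Nat.mul_le_mul hlt hpr
  linarith [h.left_pos]

@[elab_as_elim]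
theorem descent_induction {motive : ℕ → ℕ → Prop} (one : motive 1 1)
    (jump : ∀ r p q, IsQuasisolution r p → q * r = p ^ 2 + p + 1 → motive r p → motive p q)
    (h : IsQuasisolution p q) (hpq : p ≤ q) : motive p q := by
  induction q using Nat.strong_induction_on generalizing p with
  | _ q ih =>
    rcases hpq.eq_or_lt with rfl | hlt
    · exact h.eq_one_of_self ▸ one
    · obtain ⟨r, hrp, hquasi, hmul⟩ := h.exists_le_mul_eq hlt
      exact jump r p q hquasi hmul (ih p hlt hquasi hrp)

end IsQuasisolution

/-- Let (t_n) be the sequence with t_1 = t_2 = 1 and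
t_{n+2} · t_n = t_{n+1}² + t_{n+1} + 1 for all n ≥ 1. If p and q are positive
integers with p ≤ q, p ∣ q² + q + 1 and q ∣ p² + p + 1, then (p, q) is a pair
of consecutive terms of the sequence. -/
theorem stmt_6 (t : ℕ → ℕ) (h1 : t 1 = 1) (h2 : t 2 = 1)
    (hrec : ∀ n, 1 ≤ n → t (n + 2) * t n = (t (n + 1)) ^ 2 + t (n + 1) + 1)
    (p q : ℕ) (hp : 0 < p) (hq : 0 < q) (hpq : p ≤ q)
    (hd1 : p ∣ q ^ 2 + q + 1) (hd2 : q ∣ p ^ 2 + p + 1) :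
    ∃ n, 1 ≤ n ∧ p = t n ∧ q = t (n + 1) := by
  have hquasi : IsQuasisolution p q := ⟨hd1, hd2⟩
  refine hquasi.descent_induction (motive := fun p q => ∃ n, 1 ≤ n ∧ p = t n ∧ q = t (n + 1))
    ⟨1, le_rfl, h1.symm, h2.symm⟩ ?_ hpq
  rintro r p q hr hmul ⟨n, hn, rfl, rfl⟩
  have hnext : q * t n = t (n + 2) * t n := hmul.trans (hrec n hn).symm
  exact ⟨n + 1, Nat.le_add_left 1 n, rfl, Nat.eq_of_mul_eq_mul_right hr.left_pos hnext⟩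
end

section
/- Let (t_n) be the sequence defined by t_1 = t_2 = 1 and t_{n+2} · t_n = t_{n+1}² + t_{n+1} + 1 for all n ≥ 1. Then for all n > 3, one has 4·t_n < t_{n+1} < 5·t_n. -/
/-!
A sequence satisfying `u (n + 2) * u n = u (n + 1) ^ 2 + b * u (n + 1) + c` has a conserved
quantity: the ratio of `u n + u (n + 2) + b` to `u (n + 1)` does not depend on `n`. When that
ratio is `k + 1`, the nonlinear recurrence becomes the linear one
`u (n + 2) = (k + 1) * u (n + 1) - (u n + b)`, so both bounds on `u (n + 2)` amount to
`0 < u n + b < u (n + 1)`, which the linear recurrence propagates as soon as `2 ≤ k`.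
For `t`, from `t 2, t 3, t 4 = 1, 3, 13` the ratio is `(1 + 13 + 1) / 3 = 5`.
-/

section QuadraticRecurrence

variable {R : Type*} [CommSemiring R] {u : ℕ → R} {b c : R}

theorem add_add_eq_mul_of_quadratic_recurrence [IsCancelMulZero R] {r : R}
    (hu : ∀ n, u (n + 1) ≠ 0)
    (hrec : ∀ n, u (n + 2) * u n = u (n + 1) ^ 2 + b * u (n + 1) + c)
    (h0 : u 0 + u 2 + b = r * u 1) (n : ℕ) :
    u n + u (n + 2) + b = r * u (n + 1) := by
  induction n with
  | zero => exact h0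
  | succ n ih =>
    apply mul_left_cancel₀ (hu n)
    calc u (n + 1) * (u (n + 1) + u (n + 3) + b)
        = u (n + 3) * u (n + 1) + u (n + 1) ^ 2 + b * u (n + 1) := by ring
      _ = u (n + 2) ^ 2 + b * u (n + 2) + (u (n + 1) ^ 2 + b * u (n + 1) + c) := by
        rw [hrec (n + 1)]; ring
      _ = u (n + 2) * (u n + u (n + 2) + b) := by rw [← hrec n]; ring
      _ = u (n + 1) * (r * u (n + 2)) := by rw [ih]; ring

theorem pos_of_quadratic_recurrence [LinearOrder R] [IsStrictOrderedRing R]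
    (hb : 0 ≤ b) (hc : 0 ≤ c) (h0 : 0 < u 0) (h1 : 0 < u 1)
    (hrec : ∀ n, u (n + 2) * u n = u (n + 1) ^ 2 + b * u (n + 1) + c) (n : ℕ) :
    0 < u n := by
  induction n using Nat.twoStepInduction with
  | zero => exact h0
  | one => exact h1
  | more n hn hn' =>
    have hprod : 0 < u (n + 2) * u n := by rw [hrec n]; positivity
    exact pos_of_mul_pos_left hprod hn.le

end QuadraticRecurrence

theorem mul_lt_of_add_add_eq_add_one_mul {R : Type*} [Semiring R] [PartialOrder R]
    [IsOrderedCancelAddMonoid R] {b k x y z : R} (h : x + z + b = (k + 1) * y)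
    (hxy : x + b < y) : k * y < z := by
  refine lt_of_add_lt_add_right (a := x + b) ?_
  calc k * y + (x + b) < k * y + y := by gcongr
    _ = x + z + b := by rw [h, add_one_mul]
    _ = z + (x + b) := by abel

theorem lt_of_add_add_eq {M : Type*} [AddCommMonoid M] [Preorder M] [AddLeftStrictMono M]
    {b x y z : M} (h : x + z + b = y) (hxb : 0 < x + b) : z < y := by
  calc z < z + (x + b) := lt_add_of_pos_right z hxb
    _ = y := by rw [← h]; abel

theorem add_lt_succ_of_linear_recurrence {R : Type*} [Semiring R] [PartialOrder R]
    [IsStrictOrderedRing R] {u : ℕ → R} {b k : R} (hu : ∀ n, 0 ≤ u n) (hk : 2 ≤ k)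
    (hlin : ∀ n, u n + u (n + 2) + b = (k + 1) * u (n + 1)) (h0 : u 0 + b < u 1) (n : ℕ) :
    u n + b < u (n + 1) := by
  induction n with
  | zero => exact h0
  | succ n ih =>
    have hb : b ≤ u (n + 1) := le_of_add_le_of_nonneg_right ih.le (hu n)
    calc u (n + 1) + b ≤ u (n + 1) + u (n + 1) := by gcongr
      _ = 2 * u (n + 1) := (two_mul _).symm
      _ ≤ k * u (n + 1) := mul_le_mul_of_nonneg_right hk (hu (n + 1))
      _ < u (n + 2) := mul_lt_of_add_add_eq_add_one_mul (hlin n) ih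

theorem mul_lt_and_lt_mul_of_quadratic_recurrence {R : Type*} [CommSemiring R] [LinearOrder R]
    [IsStrictOrderedRing R] [ExistsAddOfLE R] {u : ℕ → R} {b c k : R}
    (hb : 0 ≤ b) (hc : 0 ≤ c) (hk : 2 ≤ k)
    (hrec : ∀ n, u (n + 2) * u n = u (n + 1) ^ 2 + b * u (n + 1) + c)
    (h0 : 0 < u 0) (h1 : u 0 + b < u 1) (h2 : u 0 + u 2 + b = (k + 1) * u 1) (n : ℕ) :
    k * u (n + 1) < u (n + 2) ∧ u (n + 2) < (k + 1) * u (n + 1) := by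
  have hpos : ∀ n, 0 < u n :=
    pos_of_quadratic_recurrence hb hc h0 ((add_pos_of_pos_of_nonneg h0 hb).trans h1) hrec
  have hlin : ∀ n, u n + u (n + 2) + b = (k + 1) * u (n + 1) :=
    add_add_eq_mul_of_quadratic_recurrence (fun n ↦ (hpos (n + 1)).ne') hrec h2
  have hgrowth : u n + b < u (n + 1) :=
    add_lt_succ_of_linear_recurrence (fun n ↦ (hpos n).le) hk hlin h1 n
  exact ⟨mul_lt_of_add_add_eq_add_one_mul (hlin n) hgrowth,
    lt_of_add_add_eq (hlin n) (add_pos_of_pos_of_nonneg (hpos n) hb)⟩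

theorem stmt_7_general {R : Type*} [CommSemiring R] [LinearOrder R] [IsStrictOrderedRing R]
    [ExistsAddOfLE R] (t : ℕ → R) (h1 : t 1 = 1) (h2 : t 2 = 1)
    (hrec : ∀ n, 1 ≤ n → t (n + 2) * t n = (t (n + 1)) ^ 2 + t (n + 1) + 1) :
    ∀ n, 3 ≤ n → 4 * t n < t (n + 1) ∧ t (n + 1) < 5 * t n := by
  intro n hn
  obtain ⟨m, rfl⟩ := Nat.exists_eq_add_of_le' hn
  have h3 : t 3 = 3 := by
    calc t 3 = 1 ^ 2 + 1 + 1 := by simpa only [h1, h2, mul_one] using hrec 1 le_rfl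
      _ = 3 := by norm_num
  have h4 : t 4 = 13 := by
    calc t 4 = 3 ^ 2 + 3 + 1 := by simpa only [h2, h3, mul_one] using hrec 2 one_le_two
      _ = 13 := by norm_num
  have hrec' (n : ℕ) : t (n + 4) * t (n + 2) = t (n + 3) ^ 2 + 1 * t (n + 3) + 1 := by
    rw [one_mul]
    exact hrec (n + 2) (by lia)
  simpa only [show (4 + 1 : R) = 5 by norm_num] using
    mul_lt_and_lt_mul_of_quadratic_recurrence (u := fun n ↦ t (n + 2)) (k := 4)
      zero_le_one zero_le_one (by norm_num) hrec' (by norm_num [h2]) (by norm_num [h2, h3])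
      (by norm_num [h2, h3, h4]) m

/-- Let (t_n) be the sequence with t_1 = t_2 = 1 and
t_{n+2} · t_n = t_{n+1}² + t_{n+1} + 1 for all n ≥ 1. Then for all n > 3,
4·t_n < t_{n+1} < 5·t_n. -/
theorem stmt_7 (t : ℕ → ℕ) (h1 : t 1 = 1) (h2 : t 2 = 1)
    (hrec : ∀ n, 1 ≤ n → t (n + 2) * t n = (t (n + 1)) ^ 2 + t (n + 1) + 1) :
    ∀ n, 3 < n → 4 * t n < t (n + 1) ∧ t (n + 1) < 5 * t n :=
  fun n hn ↦ stmt_7_general t h1 h2 hrec n hn.le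
end

section
/- There are no odd primes p and q such that p² divides q² + q + 1 and q divides p² + p + 1. -/
/-!
If `a ∣ b² + b + 1` and `b ∣ a² + a + 1`, then `a` and `b` are coprime and both divide
`a² + b² + a + b + 1`, so this sum is `k a b` for some `k`. Vieta jumping descends from any
positive solution to `a = b = 1`, which forces `k = 5`. If moreover `a² ∣ b² + b + 1`, dividing the
equation by `a` shows that `k b ≡ 1` modulo `a`; thus `b = 1 / k` is a root of `x² + x + 1` modulo
`a`, so `a ∣ k² + k + 1 = 31`. Finally, for `a = 31` the equation `k = 5` is a quadratic in `b` with
no integer root.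
-/

theorem mul_dvd_sq_add_sq_add_add_one {R : Type*} [CommRing R] {a b : R}
    (hab : a ∣ b ^ 2 + b + 1) (hba : b ∣ a ^ 2 + a + 1) :
    a * b ∣ a ^ 2 + b ^ 2 + a + b + 1 := by
  have hcop : IsCoprime a b := by
    obtain ⟨m, hm⟩ := hab
    exact ⟨m, -(b + 1), by linear_combination -hm⟩
  refine hcop.mul_dvd ?_ ?_
  · convert dvd_add (dvd_mul_right a (a + 1)) hab using 1
    ring
  · convert dvd_add (dvd_mul_right b (b + 1)) hba using 1
    ring

/-- The number `k * a - 1 - b` is the second root of the equation regarded as a quadratic in `b`: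
the two roots have sum `k * a - 1` and product `a ^ 2 + a + 1`. -/
theorem vieta_jump_mem_Ioc {k a b : ℤ} (ha : 0 < a) (hab : a < b)
    (h : a ^ 2 + b ^ 2 + a + b + 1 = k * (a * b)) : k * a - 1 - b ∈ Set.Ioc 0 a := by
  have hprod : b * (k * a - 1 - b) = a ^ 2 + a + 1 := by linear_combination -h
  constructor
  · refine pos_of_mul_pos_right (a := b) ?_ (ha.trans hab).le
    rw [hprod]
    positivity
  · by_contra! hlt
    have hbig : (a + 1) * (a + 1) ≤ b * (k * a - 1 - b) := by gcongr <;> omega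
    linarith [hprod, hbig]

theorem eq_five_of_sq_add_sq_add_add_one_eq_mul {k a b : ℤ} (ha : 0 < a) (hb : 0 < b)
    (h : a ^ 2 + b ^ 2 + a + b + 1 = k * (a * b)) : k = 5 := by
  induction hn : (a + b).toNat using Nat.strong_induction_on generalizing a b with | _ n ih
  wlog hab : a ≤ b generalizing a b
  · exact this hb ha (by linear_combination h) (by rwa [add_comm]) (le_of_not_ge hab)
  obtain rfl | hlt := hab.eq_or_lt
  · have hdvd : a ∣ 1 := ⟨k * a - 2 * a - 2, by linear_combination h⟩
    obtain rfl : a = 1 := Int.eq_one_of_dvd_one ha.le hdvd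
    linarith
  · obtain ⟨hpos, hle⟩ := vieta_jump_mem_Ioc ha hlt h
    exact ih _ (by omega) ha hpos (by linear_combination h) rfl

theorem sq_add_sq_add_add_one_eq_five_mul {a b : ℤ} (ha : 0 < a) (hb : 0 < b)
    (hab : a ∣ b ^ 2 + b + 1) (hba : b ∣ a ^ 2 + a + 1) :
    a ^ 2 + b ^ 2 + a + b + 1 = 5 * (a * b) := by
  obtain ⟨k, hk⟩ := mul_dvd_sq_add_sq_add_add_one hab hba
  rw [mul_comm] at hk
  rwa [eq_five_of_sq_add_sq_add_add_one_eq_mul ha hb hk] at hk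

theorem dvd_sq_add_add_one_of_sq_dvd {R : Type*} [CommRing R] [NoZeroDivisors R] {k a b : R}
    (ha : a ≠ 0) (h : a ^ 2 + b ^ 2 + a + b + 1 = k * (a * b)) (hab : a ^ 2 ∣ b ^ 2 + b + 1) :
    a ∣ k ^ 2 + k + 1 := by
  obtain ⟨m, hm⟩ := hab
  have hinv : k * b - 1 = a * (m + 1) :=
    mul_left_cancel₀ ha (by linear_combination hm - h)
  have hroot : k ^ 2 + k + 1 = k ^ 2 * (b ^ 2 + b + 1) - (k * b - 1) * (k * b + 1 + k) := by ring
  rw [hroot, hm, hinv]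
  exact ⟨k ^ 2 * (a * m) - (m + 1) * (k * b + 1 + k), by ring⟩

theorem thirtyOne_sq_add_sq_add_add_one_ne_five_mul (b : ℤ) :
    31 ^ 2 + b ^ 2 + 31 + b + 1 ≠ 5 * (31 * b) := by
  intro h
  -- The quadratic is `b ^ 2 - 154 * b + 993`, with reduced discriminant `77 ^ 2 - 993 = 4936`.
  have hsq : IsSquare (4936 : ℤ) := ⟨b - 77, by linear_combination -h⟩
  norm_num at hsq

theorem stmt_8_general {a b : ℕ} (hab : a ^ 2 ∣ b ^ 2 + b + 1) (hba : b ∣ a ^ 2 + a + 1) :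
    a = 1 := by
  have ha : 0 < a := Nat.pos_of_ne_zero (by rintro rfl; simp at hab)
  have hb : 0 < b := Nat.pos_of_ne_zero (by rintro rfl; simp at hba)
  have hab' : (a : ℤ) ^ 2 ∣ b ^ 2 + b + 1 := mod_cast hab
  have heq : (a : ℤ) ^ 2 + b ^ 2 + a + b + 1 = 5 * (a * b) :=
    sq_add_sq_add_add_one_eq_five_mul (mod_cast ha) (mod_cast hb)
      ((dvd_pow_self _ two_ne_zero).trans hab') (mod_cast hba)
  have hdvd : a ∣ 31 := mod_cast dvd_sq_add_add_one_of_sq_dvd (mod_cast ha.ne') heq hab'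
  obtain rfl | rfl := (Nat.dvd_prime (by norm_num)).mp hdvd
  · rfl
  · exact absurd heq (thirtyOne_sq_add_sq_add_add_one_ne_five_mul b)

/-- There are no odd primes p and q with p² ∣ q² + q + 1 and
q ∣ p² + p + 1. -/
theorem stmt_8 (p q : ℕ) (hp : p.Prime) (hq : q.Prime) (hpodd : Odd p) (hqodd : Odd q) :
    ¬ (p ^ 2 ∣ q ^ 2 + q + 1 ∧ q ∣ p ^ 2 + p + 1) :=
  fun ⟨hpq, hqp⟩ => hp.ne_one (stmt_8_general hpq hqp)
end

section
/- Suppose p, q, r are distinct odd primes such that (p, q) is a σ_{2,2} pair and (q, r) is a σ_{2,2} pair. Then {p, q, r} = {3, 13, 61}. -/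
/-!
If `q ∣ p² + p + 1` and `p ∣ q² + q + 1`, then `p` and `q` are coprime, so `p q` divides
`p² + q² + p + q + 1`. Vieta jumping takes any solution of `a² + b² + a + b + 1 = k a b` in natural
numbers down to `a = b = 1`, so the quotient is always `5`. In a chain `p, q, r` with `p ≠ r`, the
numbers `p` and `r` are therefore the two roots of one quadratic in which `q` is a parameter, and
`p + r + 1 = 5 q`. Modulo `3` this forces one of the three numbers to be divisible by `3`. If they
are prime, that number is `3`, and the factorizations of `3² + 3 + 1 = 13` and
`13² + 13 + 1 = 3 · 61` determine the chain.
-/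

theorem eq_five_of_vieta_diagonal {k a : ℕ} (h : a ^ 2 + a ^ 2 + a + a + 1 = k * a * a) :
    k = 5 := by
  have hdvd : a ∣ a * (2 * a + 2) + 1 := ⟨k * a, by linear_combination h⟩
  obtain rfl : a = 1 := Nat.dvd_one.1 ((Nat.dvd_add_right (dvd_mul_right a _)).1 hdvd)
  linarith

theorem exists_vieta_jump {k a b : ℕ} (hab : a < b)
    (h : a ^ 2 + b ^ 2 + a + b + 1 = k * a * b) :
    ∃ c ≤ a, c ^ 2 + a ^ 2 + c + a + 1 = k * c * a := by
  have ha : 0 < a := Nat.pos_of_ne_zero (by rintro rfl; simp at h)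
  zify at ha hab h
  -- The second root of the quadratic `X² - (k a - 1) X + (a² + a + 1)`, whose first root is `b`.
  obtain ⟨c, hsum⟩ : ∃ c : ℤ, b + c = k * a - 1 := ⟨k * a - 1 - b, by ring⟩
  have hprod : b * c = (a : ℤ) ^ 2 + a + 1 := by linear_combination b * hsum - h
  have hc : 0 < c := pos_of_mul_pos_right (hprod ▸ by positivity) (by positivity : (0 : ℤ) ≤ b)
  have hca : c ≤ a := by
    by_contra! hac
    have : ((a : ℤ) + 1) * (a + 1) ≤ b * c := by gcongr <;> lia
    linarith
  have hroot : c ^ 2 + (a : ℤ) ^ 2 + c + a + 1 = k * c * a := by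
    linear_combination c * hsum - hprod
  lift c to ℕ using hc.le
  exact ⟨c, mod_cast hca, mod_cast hroot⟩

theorem eq_five_of_vieta_of_le {k a b : ℕ} (hab : a ≤ b)
    (h : a ^ 2 + b ^ 2 + a + b + 1 = k * a * b) : k = 5 := by
  induction b using Nat.strong_induction_on generalizing a with
  | _ b ih =>
    rcases hab.eq_or_lt with rfl | hlt
    · exact eq_five_of_vieta_diagonal h
    · obtain ⟨c, hca, hjump⟩ := exists_vieta_jump hlt h
      exact ih a hlt hca hjump

theorem eq_five_of_vieta {k a b : ℕ} (h : a ^ 2 + b ^ 2 + a + b + 1 = k * a * b) : k = 5 := by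
  rcases le_total a b with hab | hba
  · exact eq_five_of_vieta_of_le hab h
  · exact eq_five_of_vieta_of_le hba (by linear_combination h)

theorem add_add_one_eq_mul_of_vieta_of_ne {R : Type*} [CommRing R] [NoZeroDivisors R]
    {k x y z : R} (hxz : x ≠ z) (hx : x ^ 2 + y ^ 2 + x + y + 1 = k * x * y)
    (hz : z ^ 2 + y ^ 2 + z + y + 1 = k * z * y) : x + z + 1 = k * y :=
  mul_left_cancel₀ (sub_ne_zero.2 hxz) (by linear_combination hx - hz)

/-- The divisibility conditions of a `σ_{2,2}` pair, without the primality of its members: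
`p ^ 2 + p + 1` is the divisor sum `σ (p ^ 2)` when `p` is prime. -/
def IsSigmaPair (p q : ℕ) : Prop :=
  q ∣ p ^ 2 + p + 1 ∧ p ∣ q ^ 2 + q + 1

namespace IsSigmaPair

variable {p q r : ℕ}

theorem symm (h : IsSigmaPair p q) : IsSigmaPair q p :=
  And.symm h

theorem coprime (h : IsSigmaPair p q) : p.Coprime q := by
  have hcop : p.Coprime (p * (p + 1) + 1) :=
    (Nat.coprime_mul_left_add_right p 1 (p + 1)).2 (Nat.coprime_one_right p)
  have hexpand : p ^ 2 + p + 1 = p * (p + 1) + 1 := by ring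
  exact hcop.coprime_dvd_right (hexpand ▸ h.1)

theorem mul_dvd (h : IsSigmaPair p q) : p * q ∣ p ^ 2 + q ^ 2 + p + q + 1 := by
  have hp : p ^ 2 + q ^ 2 + p + q + 1 = p * (p + 1) + (q ^ 2 + q + 1) := by ring
  have hq : p ^ 2 + q ^ 2 + p + q + 1 = q * (q + 1) + (p ^ 2 + p + 1) := by ring
  exact h.coprime.mul_dvd_of_dvd_of_dvd (hp ▸ (dvd_mul_right p (p + 1)).add h.2)
    (hq ▸ (dvd_mul_right q (q + 1)).add h.1)

theorem sq_add_sq_add_add_add_one_eq (h : IsSigmaPair p q) :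
    p ^ 2 + q ^ 2 + p + q + 1 = 5 * p * q := by
  obtain ⟨k, hk⟩ := h.mul_dvd
  have hvieta : p ^ 2 + q ^ 2 + p + q + 1 = k * p * q := by linear_combination hk
  rwa [eq_five_of_vieta hvieta] at hvieta

theorem add_add_one_eq_five_mul (hpq : IsSigmaPair p q) (hqr : IsSigmaPair q r) (hpr : p ≠ r) :
    p + r + 1 = 5 * q := by
  have hp := hpq.sq_add_sq_add_add_add_one_eq
  have hr := hqr.symm.sq_add_sq_add_add_add_one_eq
  zify at hpr hp hr ⊢
  exact add_add_one_eq_mul_of_vieta_of_ne hpr hp hr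

theorem three_dvd_or_three_dvd_or_three_dvd (hpq : IsSigmaPair p q) (hqr : IsSigmaPair q r)
    (hpr : p ≠ r) : 3 ∣ p ∨ 3 ∣ q ∨ 3 ∣ r := by
  have hmod : ∀ x y z : ZMod 3, x ^ 2 + y ^ 2 + x + y + 1 = 5 * x * y → x + z + 1 = 5 * y →
      x = 0 ∨ y = 0 ∨ z = 0 := by decide
  simp only [← ZMod.natCast_eq_zero_iff]
  exact hmod p q r (mod_cast congrArg (Nat.cast : ℕ → ZMod 3) hpq.sq_add_sq_add_add_add_one_eq)
    (mod_cast congrArg (Nat.cast : ℕ → ZMod 3) (hpq.add_add_one_eq_five_mul hqr hpr))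

theorem eq_thirteen_of_prime (h : IsSigmaPair 3 q) (hq : q.Prime) : q = 13 :=
  (Nat.prime_dvd_prime_iff_eq hq (by norm_num)).1 h.1

theorem eq_three_or_eq_sixty_one_of_prime (h : IsSigmaPair 13 r) (hr : r.Prime) :
    r = 3 ∨ r = 61 := by
  have hdvd : r ∣ 3 * 61 := h.1
  exact (hr.dvd_mul.1 hdvd).imp (Nat.prime_dvd_prime_iff_eq hr (by norm_num)).1
    (Nat.prime_dvd_prime_iff_eq hr (by norm_num)).1

theorem eq_thirteen_and_eq_sixty_one (h3q : IsSigmaPair 3 q) (hqr : IsSigmaPair q r)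
    (hq : q.Prime) (hr : r.Prime) (hr3 : r ≠ 3) : q = 13 ∧ r = 61 := by
  obtain rfl := h3q.eq_thirteen_of_prime hq
  exact ⟨rfl, (hqr.eq_three_or_eq_sixty_one_of_prime hr).resolve_left hr3⟩

end IsSigmaPair

/-- If p, q, r are distinct odd primes with (p, q) a σ_{2,2} pair
and (q, r) a σ_{2,2} pair, then {p, q, r} = {3, 13, 61}. -/
theorem stmt_10 (p q r : ℕ) (hp : p.Prime) (hq : q.Prime) (hr : r.Prime)
    (hpodd : Odd p) (hqodd : Odd q) (hrodd : Odd r)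
    (hpq : p ≠ q) (hqr : q ≠ r) (hpr : p ≠ r)
    (h1 : q ∣ p ^ 2 + p + 1) (h2 : p ∣ q ^ 2 + q + 1)
    (h3 : r ∣ q ^ 2 + q + 1) (h4 : q ∣ r ^ 2 + r + 1) :
    ({p, q, r} : Finset ℕ) = ({3, 13, 61} : Finset ℕ) := by
  have pair_pq : IsSigmaPair p q := ⟨h1, h2⟩
  have pair_qr : IsSigmaPair q r := ⟨h3, h4⟩
  have eq_three {s : ℕ} (hs : s.Prime) (h : 3 ∣ s) : s = 3 :=
    ((Nat.prime_dvd_prime_iff_eq Nat.prime_three hs).1 h).symm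
  rcases pair_pq.three_dvd_or_three_dvd_or_three_dvd pair_qr hpr with h | h | h
  · obtain rfl := eq_three hp h
    obtain ⟨rfl, rfl⟩ := pair_pq.eq_thirteen_and_eq_sixty_one pair_qr hq hr hpr.symm
    rfl
  · obtain rfl := eq_three hq h
    have hp13 : p = 13 := pair_pq.symm.eq_thirteen_of_prime hp
    have hr13 : r = 13 := pair_qr.eq_thirteen_of_prime hr
    exact absurd (hp13.trans hr13.symm) hpr
  · obtain rfl := eq_three hr h
    obtain ⟨rfl, rfl⟩ := pair_qr.symm.eq_thirteen_and_eq_sixty_one pair_pq.symm hq hp hpr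
    decide
end

section
/- If p and q are odd primes with p dividing q + 1 and q dividing σ(p⁴) = p⁴ + p³ + p² + p + 1, then p² does not divide q + 1. -/
/-!
Write `p ^ 4 + p ^ 3 + p ^ 2 + p + 1 = q * m`. Modulo `p ^ 2` we have `q ≡ -1`, so
`m ≡ -(p + 1)` and hence `m ≥ p ^ 2 - p - 1`. The value `q = p ^ 2 - 1` is impossible, because
`p + 1` is coprime to `p ^ 4 + p ^ 3 + p ^ 2 + p + 1`, so `q ≥ 2 * p ^ 2 - 1`. The product of the
two bounds exceeds `p ^ 4 + p ^ 3 + p ^ 2 + p + 1` by `p ^ 2 * (p + 1) * (p - 4)`, which leaves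
only `p ≤ 4`, where `q = 31` occurs for `p = 2` and `p = 4`.
-/

lemma dvd_add_of_dvd_add_one_of_mul_modEq {d q m c : ℕ} (hq : d ∣ q + 1)
    (hqm : q * m ≡ c [MOD d]) : d ∣ m + c := by
  rw [← (hqm.add_left m).dvd_iff dvd_rfl, add_comm, ← Nat.succ_mul]
  exact hq.mul_right m

lemma coprime_add_one_quartic (p : ℕ) : (p + 1).Coprime (p ^ 4 + p ^ 3 + p ^ 2 + p + 1) := by
  have division : p ^ 4 + p ^ 3 + p ^ 2 + p + 1 = 1 + (p + 1) * (p ^ 3 + p) := by ring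
  simp [division]

lemma add_one_ne_sq_of_dvd_quartic {p q : ℕ} (hp : p ≠ 0)
    (hq : q ∣ p ^ 4 + p ^ 3 + p ^ 2 + p + 1) : q + 1 ≠ p ^ 2 := by
  intro hsq
  have hdvd : p + 1 ∣ q := ⟨p - 1, by rw [← Nat.sq_sub_sq, ← hsq]; simp⟩
  have hone : p + 1 = 1 := (coprime_add_one_quartic p).eq_one_of_dvd (hdvd.trans hq)
  exact hp (Nat.succ_inj.mp hone)

lemma two_mul_sq_le_add_one_of_dvd_quartic {p q : ℕ} (hsq : p ^ 2 ∣ q + 1)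
    (hq : q ∣ p ^ 4 + p ^ 3 + p ^ 2 + p + 1) : 2 * p ^ 2 ≤ q + 1 := by
  obtain ⟨k, hk⟩ := hsq
  have hp : p ≠ 0 := by rintro rfl; simp at hk
  have hk_zero : k ≠ 0 := by rintro rfl; simp at hk
  have hk_one : k ≠ 1 := by
    rintro rfl
    exact add_one_ne_sq_of_dvd_quartic hp hq (by simpa using hk)
  rw [hk, mul_comm]
  exact Nat.mul_le_mul_left _ (by lia)

lemma sq_dvd_add_of_quartic_eq_mul {p q m : ℕ} (hsq : p ^ 2 ∣ q + 1)
    (hm : p ^ 4 + p ^ 3 + p ^ 2 + p + 1 = q * m) : p ^ 2 ∣ m + (p + 1) := by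
  apply dvd_add_of_dvd_add_one_of_mul_modEq hsq
  have hmod : p ^ 2 * (p ^ 2 + p + 1) + (p + 1) ≡ p + 1 [MOD p ^ 2] := by
    simp [Nat.ModEq]
  convert hmod using 1
  rw [← hm]
  ring

lemma quartic_lt_mul {p q m : ℤ} (hp : 4 < p) (hq : 2 * p ^ 2 ≤ q + 1)
    (hm : p ^ 2 ≤ m + (p + 1)) : p ^ 4 + p ^ 3 + p ^ 2 + p + 1 < q * m := by
  have hgap : 0 < p ^ 2 * (p + 1) * (p - 4) :=
    mul_pos (mul_pos (by positivity) (by lia)) (by lia)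
  calc
    p ^ 4 + p ^ 3 + p ^ 2 + p + 1
      < p ^ 4 + p ^ 3 + p ^ 2 + p + 1 + p ^ 2 * (p + 1) * (p - 4) := lt_add_of_pos_right _ hgap
    _ = (2 * p ^ 2 - 1) * (p ^ 2 - p - 1) := by ring
    _ ≤ q * m := mul_le_mul (by lia) (by lia) (by nlinarith) (by nlinarith)

lemma le_four_of_sq_dvd_add_one_of_dvd_quartic {p q : ℕ} (hsq : p ^ 2 ∣ q + 1)
    (hq : q ∣ p ^ 4 + p ^ 3 + p ^ 2 + p + 1) : p ≤ 4 := by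
  by_contra! hp
  have hq_lower : 2 * p ^ 2 ≤ q + 1 := two_mul_sq_le_add_one_of_dvd_quartic hsq hq
  obtain ⟨m, hm⟩ := hq
  have hm_lower : p ^ 2 ≤ m + (p + 1) :=
    Nat.le_of_dvd (by positivity) (sq_dvd_add_of_quartic_eq_mul hsq hm)
  have hlt : p ^ 4 + p ^ 3 + p ^ 2 + p + 1 < q * m := by
    exact_mod_cast quartic_lt_mul (p := p) (q := q) (m := m) (by exact_mod_cast hp)
      (by exact_mod_cast hq_lower) (by exact_mod_cast hm_lower)
  exact hlt.ne hm

theorem stmt_12_general {p q : ℕ} (hp : p ≠ 1) :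
    p ^ 2 ∣ q + 1 ∧ q ∣ p ^ 4 + p ^ 3 + p ^ 2 + p + 1 ↔ (p = 2 ∨ p = 4) ∧ q = 31 := by
  constructor
  · rintro ⟨hsq, hq⟩
    have hp_le : p ≤ 4 := le_four_of_sq_dvd_add_one_of_dvd_quartic hsq hq
    interval_cases p
    · simp at hsq
    · contradiction
    · have hdivisors : ∀ d ∈ Nat.divisors 31, 2 ^ 2 ∣ d + 1 → d = 31 := by decide
      exact ⟨.inl rfl, hdivisors q (by simpa using hq) hsq⟩
    · have hdivisors : ∀ d ∈ Nat.divisors 121, ¬ 3 ^ 2 ∣ d + 1 := by decide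
      exact absurd hsq (hdivisors q (by simpa using hq))
    · have hdivisors : ∀ d ∈ Nat.divisors 341, 4 ^ 2 ∣ d + 1 → d = 31 := by decide
      exact ⟨.inr rfl, hdivisors q (by simpa using hq) hsq⟩
  · rintro ⟨rfl | rfl, rfl⟩ <;> decide

/-- If p and q are odd primes with p ∣ q + 1 and
q ∣ σ(p⁴) = p⁴ + p³ + p² + p + 1, then p² ∤ q + 1. -/
theorem stmt_12 (p q : ℕ) (hp : p.Prime) (hq : q.Prime) (hpodd : Odd p) (hqodd : Odd q)
    (h1 : p ∣ q + 1) (h2 : q ∣ p ^ 4 + p ^ 3 + p ^ 2 + p + 1) :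
    ¬ (p ^ 2 ∣ q + 1) := by
  intro hsq
  obtain ⟨rfl | rfl, -⟩ := (stmt_12_general hp.ne_one).mp ⟨hsq, h2⟩ <;> revert hpodd <;> decide
end
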